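/- arXiv:1108.2463 — 3 statements merged into one kernel-verified Lean document; each statement's English description precedes it below -/
import Mathlib

section
/- (Titchmarsh convolution theorem.) Let f, g : ℝ → ℂ be continuous, compactly supported functions, neither identically zero. Then f ⋆ g is not identically zero, inf supp (f ⋆ g) = inf supp f + inf supp g, and sup supp (f ⋆ g) = sup supp f + sup supp g. -/
open MeasureTheory Real Set

noncomputable section

/-- Convolution of functions on `ℝ` with respect to Lebesgue measure. -/
def convR (f g : ℝ → ℂ) : ℝ → ℂ := fun x => ∫ t : ℝ, f t * g (x - t)

section Helpers

open Complex Metric InnerProductSpace Filter Topology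

theorem poisson_log_factor {c w u : ℂ} {R : ℝ} (hw : w ∈ ball c R) (hu : u ∈ closedBall c R) (hwu : w ≠ u) :
    Real.log ‖w - u‖ ≤ circleAverage (poissonKernel c w • (fun z => Real.log ‖z - u‖)) c R := by
  have hR : 0 < R := pos_of_mem_ball hw
  rcases eq_or_lt_of_le (mem_closedBall.1 hu) with h | h
  · have := circleAverage_re_herglotzRieszKernel_mul_log (w := w) (ρ := u) (c := c) (R := R) h hw
    rw [← poissonKernel_eq_re_herglotzRieszKernel] at this
    exact this.ge
  · rw [dist_eq_norm] at h
    rw [mem_ball, dist_eq_norm] at hw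
    set a := u - c with ha
    let q : ℂ → ℂ := fun z => (R ^ 2 - (starRingEnd ℂ) a * (z - c)) / R
    have key : ∀ z, ‖(R:ℂ) ^ 2 - (starRingEnd ℂ) a * (z - c)‖ ^ 2 - R ^ 2 * ‖z - u‖ ^ 2
        = (R ^ 2 - ‖a‖ ^ 2) * (R ^ 2 - ‖z - c‖ ^ 2) := by
      intro z
      have : z - u = (z - c) - a := by rw [ha]; ring
      rw [this]
      generalize z - c = v
      simp only [← Complex.normSq_eq_norm_sq, Complex.normSq_apply]
      simp [pow_two]
      ring
    have hqa : AnalyticOnNhd ℂ q (closedBall c R) := by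
      intro z _
      apply Differentiable.analyticAt
      fun_prop
    have hq0 : ∀ z ∈ closedBall c R, q z ≠ 0 := by
      intro z hz
      rw [mem_closedBall, dist_eq_norm] at hz
      have h1 : ‖(starRingEnd ℂ) a * (z - c)‖ < ‖(R:ℂ)^2‖ := by
        rw [norm_mul, RCLike.norm_conj, norm_pow, Complex.norm_real, Real.norm_of_nonneg hR.le]
        nlinarith [norm_nonneg a, norm_nonneg (z - c)]
      apply div_ne_zero
      · intro h0
        rw [sub_eq_zero] at h0
        rw [h0] at h1
        exact lt_irrefl _ h1
      · exact_mod_cast hR.ne'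
    have hnq : ∀ z, ‖q z‖ = ‖(R:ℂ) ^ 2 - (starRingEnd ℂ) a * (z - c)‖ / R := by
      intro z
      simp only [q]
      rw [norm_div, Complex.norm_real, Real.norm_of_nonneg hR.le]
    have hharm : HarmonicOnNhd (fun z => Real.log ‖q z‖) (closedBall c R) :=
      fun x hx => (hqa x hx).harmonicAt_log_norm (hq0 x hx)
    have h2 := hharm.circleAverage_poissonKernel_smul (w := w) (by rwa [mem_ball, dist_eq_norm])
    have h3 : circleAverage (poissonKernel c w • (fun z => Real.log ‖z - u‖)) c R
        = circleAverage (poissonKernel c w • (fun z => Real.log ‖q z‖)) c R := by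
      apply circleAverage_congr_sphere
      intro z hz
      rw [abs_of_pos hR, mem_sphere, dist_eq_norm] at hz
      have hk := key z
      rw [hz, sub_self, mul_zero, sub_eq_zero, ← mul_pow] at hk
      have := (pow_left_inj₀ (norm_nonneg _) (by positivity) two_ne_zero).1 hk
      have h5 : ‖q z‖ = ‖z - u‖ := by
        rw [hnq, this]; field_simp
      simp only [Pi.smul_apply', h5]
    rw [h3, h2]
    apply Real.log_le_log (norm_pos_iff.2 (sub_ne_zero.2 hwu))
    rw [hnq, le_div_iff₀ hR]
    apply le_of_sq_le_sq _ (norm_nonneg _) 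
    have hk := key w
    have : 0 ≤ (R ^ 2 - ‖a‖ ^ 2) * (R ^ 2 - ‖w - c‖ ^ 2) := by
      apply mul_nonneg <;> nlinarith [norm_nonneg a, norm_nonneg (w - c)]
    nlinarith

theorem continuousOn_pk {c w : ℂ} {R : ℝ} (hw : w ∈ ball c R) : ContinuousOn (poissonKernel c w) (sphere c |R|) := by
  rw [poissonKernel_eq_re_herglotzRieszKernel]
  exact Complex.continuous_re.comp_continuousOn (continuousOn_herglotzRieszKernel_sphere hw)

theorem poisson_jensen {F : ℂ → ℂ} (hF : Differentiable ℂ F) {c w : ℂ} {R : ℝ} (hw : w ∈ ball c R)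
    (hFw : F w ≠ 0) :
    Real.log ‖F w‖ ≤ circleAverage (poissonKernel c w • (fun z => Real.log ‖F z‖)) c R := by
  have hR : 0 < R := pos_of_mem_ball hw
  have hRa : |R| = R := abs_of_pos hR
  have hFa : AnalyticOnNhd ℂ F univ := fun z _ => hF.analyticAt z
  have hwc : w ∈ closedBall c R := ball_subset_closedBall hw
  have hFm : MeromorphicOn F (closedBall c R) := fun z _ => (hF.analyticAt z).meromorphicAt
  have hord : ∀ u : closedBall c R, meromorphicOrderAt F u ≠ ⊤ := by
    have h1 : meromorphicOrderAt F w ≠ ⊤ := by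
      rw [(hF.analyticAt w).meromorphicOrderAt_eq, (hF.analyticAt w).analyticOrderAt_eq_zero.2 hFw]
      simp
    intro u
    exact hFm.meromorphicOrderAt_ne_top_of_isPreconnected (convex_closedBall c R).isPreconnected hwc u.2 h1
  have hfin := (MeromorphicOn.divisor F (closedBall c R)).finiteSupport (isCompact_closedBall c R)
  obtain ⟨g, h₁g, h₂g, h₃g⟩ := hFm.extract_zeros_poles hord hfin
  have h₄g := MeromorphicOn.extract_zeros_poles_log h₂g h₃g
  set D := MeromorphicOn.divisor F (closedBall c R) with hD
  have hDnn : ∀ u, 0 ≤ D u := by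
    have : 0 ≤ D := MeromorphicOn.AnalyticOnNhd.divisor_nonneg (fun z _ => hF.analyticAt z)
    intro u; exact this u
  have hDw : D w = 0 := by
    rw [hD, MeromorphicOn.divisor_apply hFm hwc, (hF.analyticAt w).meromorphicOrderAt_eq, (hF.analyticAt w).analyticOrderAt_eq_zero.2 hFw]
    simp
  have hacc : AccPt w (𝓟 (closedBall c R)) := by
    apply accPt_iff_frequently_nhdsNE.mpr
    apply compl_notMem
    apply mem_nhdsWithin.mpr
    exact ⟨ball c R, isOpen_ball, hw, fun _ h => ball_subset_closedBall h.1⟩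
  have hval := MeromorphicOn.log_norm_meromorphicTrailingCoeffAt_extract_zeros_poles hfin hwc hacc
    (hFm w hwc) (h₁g w hwc) (h₂g ⟨w, hwc⟩) h₃g
  rw [(hF.analyticAt w).meromorphicTrailingCoeffAt_of_ne_zero hFw] at hval
  have hs : (∑ᶠ u, (fun z : ℂ => (D u : ℝ) * Real.log ‖z - u‖)) = ∑ u ∈ hfin.toFinset, (fun z : ℂ => (D u : ℝ) * Real.log ‖z - u‖) := by
    rw [finsum_eq_sum_of_support_subset]
    intro u
    contrapose
    aesop
  have hs' : (∑ᶠ u, (D u : ℝ) * Real.log ‖w - u‖) = ∑ u ∈ hfin.toFinset, (D u : ℝ) * Real.log ‖w - u‖ := by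
    rw [finsum_eq_sum_of_support_subset]
    intro u
    contrapose
    aesop
  have hcong : circleAverage (poissonKernel c w • (fun z => Real.log ‖F z‖)) c R
      = circleAverage (∑ u ∈ hfin.toFinset, (fun z => (D u : ℝ) • (poissonKernel c w • (fun z : ℂ => Real.log ‖z - u‖)) z) + (poissonKernel c w • (fun z => Real.log ‖g z‖))) c R := by
    apply circleAverage_congr_codiscreteWithin _ hR.ne'
    have h5 := codiscreteWithin_mono (sphere_subset_closedBall (x := c) (ε := R)) h₄g
    rw [hRa]
    filter_upwards [h5] with z hz
    rw [hs] at hz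
    simp only [Pi.smul_apply', hz, Pi.add_apply, Finset.sum_apply, smul_eq_mul, mul_add, Finset.mul_sum]
    congr 1
    apply Finset.sum_congr rfl
    intros; ring
  have hint : ∀ u, CircleIntegrable (poissonKernel c w • (fun z : ℂ => Real.log ‖z - u‖)) c R := by
    intro u
    apply CircleIntegrable.continuousOn_smul _ (continuousOn_pk hw)
    apply (analyticOnNhd_id.sub analyticOnNhd_const).meromorphicOn.circleIntegrable_log_norm
  rw [hcong, circleAverage_add, circleAverage_sum, hval, hs']
  · have hharm : HarmonicOnNhd (fun z => Real.log ‖g z‖) (closedBall c R) :=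
      fun x hx => (h₁g x hx).harmonicAt_log_norm (h₂g ⟨x, hx⟩)
    rw [hharm.circleAverage_poissonKernel_smul hw]
    gcongr with u hu
    rw [circleAverage_fun_smul]
    rw [smul_eq_mul]
    have hDu : D u ≠ 0 := by simpa using hu
    apply mul_le_mul_of_nonneg_left _ (by exact_mod_cast hDnn u)
    apply poisson_log_factor hw (D.supportWithinDomain hDu)
    rintro rfl
    exact hDu hDw
  · intro u _
    exact (hint u).const_smul
  · apply CircleIntegrable.sum
    intro u _
    exact (hint u).const_smul
  · apply CircleIntegrable.continuousOn_smul _ (continuousOn_pk hw)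
    apply MeromorphicOn.circleIntegrable_log_norm
    rw [hRa]
    exact (h₁g.mono sphere_subset_closedBall).meromorphicOn

theorem harnack {F : ℂ → ℂ} (hF : Differentiable ℂ F) (hb : ∀ z, 0 ≤ z.re → ‖F z‖ ≤ 1)
    {x R : ℝ} (hx : 0 < x) (hxR : x < R) (hFx : F x ≠ 0) :
    2 * R / x * Real.log ‖F x‖ ≤ circleAverage (fun z => Real.log ‖F z‖) R R := by
  have hR : 0 < R := hx.trans hxR
  have hn : ‖(x:ℂ) - R‖ = R - x := by
    rw [← Complex.ofReal_sub, Complex.norm_real, Real.norm_eq_abs, abs_of_neg (by linarith)]; ring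
  have hw : (x : ℂ) ∈ ball (R : ℂ) R := by
    rw [mem_ball, dist_eq_norm, hn]; linarith
  have h1 := poisson_jensen hF hw hFx
  have hi : CircleIntegrable (fun z => Real.log ‖F z‖) R R := by
    apply MeromorphicOn.circleIntegrable_log_norm
    exact fun z _ => (hF.analyticAt z).meromorphicAt
  have h2 : circleAverage (poissonKernel R x • (fun z => Real.log ‖F z‖)) R R
      ≤ circleAverage (fun z => (x / (2 * R)) • Real.log ‖F z‖) R R := by
    apply circleAverage_mono (hi.continuousOn_smul (continuousOn_pk hw)) hi.const_smul
    intro z hz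
    rw [abs_of_pos hR] at hz
    have h3 := le_re_herglotzRieszKernel hz hw
    rw [hn] at h3
    have h4 : x / (2 * R) ≤ poissonKernel R x z := by
      rw [poissonKernel_eq_re_herglotzRieszKernel]
      refine le_trans ?_ h3
      rw [div_le_div_iff₀ (by positivity) (by linarith)]
      nlinarith
    have h5 : Real.log ‖F z‖ ≤ 0 := by
      apply Real.log_nonpos (norm_nonneg _)
      apply hb
      have : |(z - R).re| ≤ R := by
        have := Complex.abs_re_le_norm (z - R)
        rwa [← dist_eq_norm, mem_sphere.1 hz] at this
      rw [abs_le] at this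
      simp at this
      linarith [this.1]
    change poissonKernel _ _ z * Real.log ‖F z‖ ≤ x / (2 * R) * Real.log ‖F z‖
    nlinarith
  rw [circleAverage_fun_smul] at h2
  have h6 := h1.trans h2
  calc 2 * R / x * Real.log ‖F x‖ ≤ 2 * R / x * (x / (2 * R) * circleAverage (fun z => Real.log ‖F z‖) R R) := by
        gcongr; exact h6
    _ = _ := by field_simp

theorem ae_ne_zero {F : ℂ → ℂ} (hF : Differentiable ℂ F) {w : ℂ} (hw : F w ≠ 0) (s : Set ℂ) :
    ∀ᶠ z in codiscreteWithin s, F z ≠ 0 := by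
  have h : AnalyticOnNhd ℂ F univ := fun z _ => hF.analyticAt z
  have := h.preimage_zero_mem_codiscrete (x := w) hw
  have := codiscreteWithin_mono (subset_univ s) this
  filter_upwards [this] with z hz using by simpa using hz

theorem core_analytic {F G : ℂ → ℂ} (hF : Differentiable ℂ F) (hG : Differentiable ℂ G)
    (hbF : ∀ z, 0 ≤ z.re → ‖F z‖ ≤ 1) (hbG : ∀ z, 0 ≤ z.re → ‖G z‖ ≤ 1)
    (hlF : ∀ ε > 0, ∃ x : ℝ, 0 < x ∧ Real.exp (-ε * x) ≤ ‖F x‖)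
    (hlG : ∀ ε > 0, ∃ x : ℝ, 0 < x ∧ Real.exp (-ε * x) ≤ ‖G x‖)
    {δ K : ℝ} (hδ : 0 < δ) (hFG : ∀ z, 0 ≤ z.re → ‖F z * G z‖ ≤ Real.exp (K - δ * z.re)) : False := by
  have aux : ∀ F : ℂ → ℂ, Differentiable ℂ F → (∀ z, 0 ≤ z.re → ‖F z‖ ≤ 1) →
      (∀ ε > 0, ∃ x : ℝ, 0 < x ∧ Real.exp (-ε * x) ≤ ‖F x‖) →
      (∃ w, F w ≠ 0) ∧ ∀ᶠ R : ℝ in atTop, -(δ / 4) * R ≤ circleAverage (fun z => Real.log ‖F z‖) R R := by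
    intro F hF hb hl
    obtain ⟨x, hx, hxl⟩ := hl (δ / 8) (by positivity)
    have h0 : F x ≠ 0 := norm_pos_iff.1 ((Real.exp_pos _).trans_le hxl)
    refine ⟨⟨x, h0⟩, ?_⟩
    filter_upwards [eventually_gt_atTop x] with R hR
    refine le_trans ?_ (harnack hF hb hx hR h0)
    have : -(δ/8) * x ≤ Real.log ‖F x‖ := by
      rw [Real.le_log_iff_exp_le (norm_pos_iff.2 h0)]; exact hxl
    have hRp : 0 < R := hx.trans hR
    calc -(δ / 4) * R = 2 * R / x * (-(δ/8) * x) := by field_simp; ring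
      _ ≤ _ := by gcongr
  obtain ⟨⟨w, hw⟩, h1⟩ := aux F hF hbF hlF
  obtain ⟨⟨v, hv⟩, h2⟩ := aux G hG hbG hlG
  obtain ⟨R, hR1, hR2, hR3, hR4⟩ := (h1.and (h2.and ((eventually_gt_atTop (0:ℝ)).and (eventually_gt_atTop (2 * K / δ))))).exists
  have hiF : CircleIntegrable (fun z => Real.log ‖F z‖) R R :=
    MeromorphicOn.circleIntegrable_log_norm fun z _ => (hF.analyticAt z).meromorphicAt
  have hiG : CircleIntegrable (fun z => Real.log ‖G z‖) R R :=
    MeromorphicOn.circleIntegrable_log_norm fun z _ => (hG.analyticAt z).meromorphicAt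
  -- replace by min
  let B : ℂ → ℝ := fun z => K - δ * z.re
  have hBc : Continuous B := by fun_prop
  have hiB : CircleIntegrable B R R := hBc.continuousOn.circleIntegrable'
  have hB : circleAverage B R R = K - δ * R := by
    have : HarmonicOnNhd (fun z : ℂ => ((K:ℂ) - δ * z).re) (closedBall (R:ℂ) |R|) := by
      intro z _
      apply AnalyticAt.harmonicAt_re
      apply Differentiable.analyticAt
      fun_prop
    have h := this.circleAverage_eq
    have e : (fun z : ℂ => ((K:ℂ) - δ * z).re) = B := by ext z; simp [B]
    rw [e] at h
    rw [h]; simp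
  let S : ℂ → ℝ := fun z => Real.log ‖F z‖ + Real.log ‖G z‖
  have hS : circleAverage S R R = circleAverage (fun z => min (S z) (B z)) R R := by
    apply circleAverage_congr_codiscreteWithin _ hR3.ne'
    filter_upwards [ae_ne_zero hF hw _, ae_ne_zero hG hv _, self_mem_codiscreteWithin _] with z hz1 hz2 hz
    rw [abs_of_pos hR3] at hz
    have hre : 0 ≤ z.re := by
      have : |(z - R).re| ≤ R := by
        have := Complex.abs_re_le_norm (z - R)
        rwa [← dist_eq_norm, mem_sphere.1 hz] at this
      rw [abs_le] at this
      simp at this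
      linarith [this.1]
    symm
    apply min_eq_left
    simp only [S, B]
    rw [← Real.log_mul (norm_ne_zero_iff.2 hz1) (norm_ne_zero_iff.2 hz2), ← norm_mul, Real.log_le_iff_le_exp (norm_pos_iff.2 (mul_ne_zero hz1 hz2))]
    exact hFG z hre
  have hiS : CircleIntegrable S R R := hiF.add hiG
  have hiM : CircleIntegrable (fun z => min (S z) (B z)) R R := by
    exact ⟨hiS.1.inf hiB.1, hiS.2.inf hiB.2⟩
  have h7 : circleAverage S R R ≤ circleAverage B R R := by
    rw [hS]
    exact circleAverage_mono hiM hiB fun z _ => min_le_right _ _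
  have h8 : circleAverage S R R = circleAverage (fun z => Real.log ‖F z‖) R R + circleAverage (fun z => Real.log ‖G z‖) R R :=
    circleAverage_add hiF hiG
  rw [div_lt_iff₀ hδ] at hR4
  nlinarith

/-- Two-sided Laplace transform. -/
noncomputable def lapT (k : ℝ → ℂ) (z : ℂ) : ℂ := ∫ t : ℝ, k t * Complex.exp (z * t)

theorem lapT_integrand_norm (k : ℝ → ℂ) (z : ℂ) (t : ℝ) :
    ‖k t * Complex.exp (z * t)‖ = ‖k t‖ * Real.exp (z.re * t) := by
  rw [norm_mul, Complex.norm_exp]; simp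

theorem lapT_integrable {k : ℝ → ℂ} (hk : Integrable k) {L : ℝ} (hL : ∀ t, L < |t| → k t = 0) (z : ℂ) :
    Integrable fun t : ℝ => k t * Complex.exp (z * t) := by
  apply Integrable.mono' (hk.norm.mul_const (Real.exp (‖z‖ * L)))
  · exact hk.aestronglyMeasurable.mul (by fun_prop)
  · refine Eventually.of_forall fun t => ?_
    rw [lapT_integrand_norm]
    by_cases h : L < |t|
    · simp [hL t h]
    · push Not at h
      refine mul_le_mul_of_nonneg_left (Real.exp_le_exp.2 ?_) (norm_nonneg _)
      calc z.re * t ≤ |z.re * t| := le_abs_self _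
        _ = |z.re| * |t| := abs_mul _ _
        _ ≤ ‖z‖ * L := by gcongr; exact Complex.abs_re_le_norm z

theorem lapT_norm_le {k : ℝ → ℂ} (hk : Integrable k) {z : ℂ} {c : ℝ}
    (h : ∀ t, k t ≠ 0 → z.re * t ≤ c) :
    ‖lapT k z‖ ≤ (∫ t, ‖k t‖) * Real.exp c := by
  rw [← integral_mul_const]
  apply norm_integral_le_of_norm_le (hk.norm.mul_const _)
  refine Eventually.of_forall fun t => ?_
  rw [lapT_integrand_norm]
  by_cases h0 : k t = 0
  · simp [h0]
  · gcongr
    exact h t h0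

theorem lapT_differentiable {k : ℝ → ℂ} (hk : Integrable k) {L : ℝ} (hL : ∀ t, L < |t| → k t = 0) :
    Differentiable ℂ (lapT k) := by
  intro z
  have := (hasDerivAt_integral_of_dominated_loc_of_deriv_le (𝕜 := ℂ) (μ := volume) (x₀ := z) (s := ball z 1)
    (F := fun (z : ℂ) (t : ℝ) => k t * Complex.exp (z * t))
    (F' := fun (z : ℂ) (t : ℝ) => k t * (Complex.exp (z * t) * t))
    (bound := fun t => ‖k t‖ * (Real.exp ((‖z‖ + 1) * L) * L)) (ball_mem_nhds z one_pos) ?_ (lapT_integrable hk hL z) ?_ ?_ ?_ ?_).2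
  · exact this.differentiableAt
  · exact Eventually.of_forall fun w => (lapT_integrable hk hL w).aestronglyMeasurable
  · exact hk.aestronglyMeasurable.mul (by fun_prop)
  · refine Eventually.of_forall fun t w hw => ?_
    have hw' : ‖w‖ ≤ ‖z‖ + 1 := by
      rw [mem_ball, dist_eq_norm] at hw
      have := norm_sub_norm_le w z
      linarith
    by_cases h : L < |t|
    · simp [hL t h]
    · push Not at h
      rw [norm_mul, norm_mul, Complex.norm_exp, Complex.norm_real, Real.norm_eq_abs]
      have h0 : 0 ≤ L := (abs_nonneg t).trans h
      gcongr
      calc (w * t).re ≤ ‖w * t‖ := Complex.re_le_norm _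
        _ = ‖w‖ * |t| := by rw [norm_mul, Complex.norm_real, Real.norm_eq_abs]
        _ ≤ _ := by gcongr
  · exact hk.norm.mul_const _
  · refine Eventually.of_forall fun t w hw => ?_
    apply HasDerivAt.const_mul
    have : HasDerivAt (fun w : ℂ => w * (t:ℂ)) t w := by
      simpa using (hasDerivAt_id w).mul_const (t:ℂ)
    exact this.cexp

theorem lapT_lower {k : ℝ → ℂ} (hk : Continuous k) {L : ℝ} (hL : ∀ t, L < |t| → k t = 0)
    (h0 : ∀ t, 0 < t → k t = 0) (hs : (0:ℝ) ∈ tsupport k) {ε : ℝ} (hε : 0 < ε) :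
    ∃ x : ℝ, 0 < x ∧ (∫ t, ‖k t‖) * Real.exp (-ε * x) ≤ ‖lapT k x‖ := by
  by_contra! hcon
  have hcs : HasCompactSupport k := by
    apply HasCompactSupport.intro (K := Icc (-L) L) isCompact_Icc
    intro t ht
    apply hL
    rw [mem_Icc, ← abs_le] at ht
    exact not_le.1 ht
  have hki : Integrable k := hk.integrable_of_hasCompactSupport hcs
  set A := ∫ t, ‖k t‖ with hA
  let kp : ℝ → ℂ := indicator (Ici (-ε)) k
  let km : ℝ → ℂ := indicator (Ici (-ε))ᶜ k
  have hkpi : Integrable kp := hki.indicator measurableSet_Ici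
  have hkmi : Integrable km := hki.indicator measurableSet_Ici.compl
  have hkpL : ∀ t, L < |t| → kp t = 0 := fun t ht => by simp [kp, indicator, hL t ht]
  have hkmL : ∀ t, L < |t| → km t = 0 := fun t ht => by simp [km, indicator, hL t ht]
  let p : ℝ → ℂ := fun t => kp (t - ε)
  have hpi : Integrable p := hkpi.comp_sub_right ε
  have hpL : ∀ t, L + ε < |t| → p t = 0 := by
    intro t ht
    apply hkpL
    have := abs_sub_abs_le_abs_sub t ε
    rw [abs_of_pos hε] at this
    linarith
  have hp0 : ∀ t, p t ≠ 0 → 0 ≤ t := by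
    intro t ht
    by_contra! h
    apply ht
    simp only [p, kp, indicator, mem_Ici]
    rw [if_neg (by linarith)]
  have hd := lapT_differentiable hpi hpL
  have hP : ∀ z, lapT p z = Complex.exp (ε * z) * lapT kp z := by
    intro z
    unfold lapT
    rw [← integral_const_mul, ← integral_sub_right_eq_self (fun t : ℝ => Complex.exp (ε * z) * (kp t * Complex.exp (z * t))) ε]
    congr 1
    ext t
    simp only [p]
    rw [mul_left_comm, ← Complex.exp_add]
    congr 2
    push_cast
    ring
  have hkm : ∀ z, lapT k z = lapT kp z + lapT km z := by
    intro z
    unfold lapT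
    rw [← integral_add (lapT_integrable hkpi hkpL z) (lapT_integrable hkmi hkmL z)]
    congr 1
    ext t
    rw [← add_mul]
    congr 1
    exact (congrFun (indicator_self_add_compl (Ici (-ε)) k) t).symm
  have hkmA : ∫ t, ‖km t‖ ≤ A := by
    apply integral_mono hkmi.norm hki.norm
    intro t
    exact norm_indicator_le_norm_self _ _
  have hreal : ∀ x : ℝ, 0 < x → ‖lapT p x‖ ≤ 2 * A := by
    intro x hx
    have h1 : ‖lapT km x‖ ≤ A * Real.exp (-ε * x) := by
      refine (lapT_norm_le hkmi (c := -ε * x) ?_).trans (by gcongr)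
      intro t ht
      have : t < -ε := by
        by_contra! h
        apply ht
        simp [km, h]
      simp
      nlinarith
    have h2 : ‖lapT kp x‖ ≤ 2 * A * Real.exp (-ε * x) := by
      have : lapT kp x = lapT k x - lapT km x := by rw [hkm]; ring
      rw [this]
      have := norm_sub_le (lapT k x) (lapT km x)
      have := hcon x hx
      linarith
    rw [hP, norm_mul, Complex.norm_exp]
    have h3 : ((ε:ℂ) * x).re = ε * x := by simp
    rw [h3]
    calc Real.exp (ε * x) * ‖lapT kp x‖ ≤ Real.exp (ε * x) * (2 * A * Real.exp (-ε * x)) := by gcongr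
      _ = 2 * A * (Real.exp (ε * x) * Real.exp (-ε * x)) := by ring
      _ = 2 * A := by rw [← Real.exp_add]; simp
  set B := ∫ t, ‖p t‖ with hB
  have hleft : ∀ z : ℂ, z.re ≤ 0 → ‖lapT p z‖ ≤ B := by
    intro z hz
    have := lapT_norm_le hpi (z := z) (c := 0) (fun t ht => mul_nonpos_of_nonpos_of_nonneg hz (hp0 t ht))
    simpa using this
  have hright : ∀ z : ℂ, 0 ≤ z.re → ‖lapT p z‖ ≤ B := by
    intro z hz
    refine PhragmenLindelof.right_half_plane_of_bounded_on_real (f := lapT p) hd.diffContOnCl ?_ ?_ ?_ hz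
    · refine ⟨1, by norm_num, L + ε, ?_⟩
      apply Asymptotics.IsBigO.of_bound B
      refine Eventually.of_forall fun z => ?_
      rw [Real.norm_eq_abs, Real.abs_exp, Real.rpow_one]
      apply lapT_norm_le hpi
      intro t ht
      have h1 : |t| ≤ L + ε := by
        by_contra! h
        exact ht (hpL t h)
      calc z.re * t ≤ |z.re * t| := le_abs_self _
        _ = |t| * |z.re| := by rw [abs_mul, mul_comm]
        _ ≤ (L + ε) * ‖z‖ := by
          exact mul_le_mul h1 (Complex.abs_re_le_norm z) (abs_nonneg _) ((abs_nonneg t).trans h1)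
    · apply isBoundedUnder_of_eventually_le (a := 2 * A)
      filter_upwards [eventually_gt_atTop 0] with x hx using hreal x hx
    · intro x
      apply hleft
      simp
  have hconst : ∀ z w, lapT p z = lapT p w := by
    apply hd.apply_eq_apply_of_bounded
    rw [isBounded_iff_forall_norm_le]
    refine ⟨B, ?_⟩
    rintro _ ⟨z, rfl⟩
    rcases le_total z.re 0 with h | h
    · exact hleft z h
    · exact hright z h
  have hfour : ∀ y : ℝ, FourierTransform.fourier p y = lapT p 0 := by
    intro y
    rw [Real.fourier_real_eq_integral_exp_smul, hconst 0 (-2 * π * y * I)]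
    unfold lapT
    congr 1
    ext t
    rw [smul_eq_mul, mul_comm]
    congr 2
    push_cast
    ring
  have hzero : lapT p 0 = 0 := by
    have h1 := Real.zero_at_infty_fourier p
    have h2 : Tendsto (FourierTransform.fourier p) (cocompact ℝ) (𝓝 (lapT p 0)) := by
      have : FourierTransform.fourier p = fun _ => lapT p 0 := funext hfour
      rw [this]
      exact tendsto_const_nhds
    exact tendsto_nhds_unique h2 h1
  have hf0 : FourierTransform.fourier p = 0 := by
    ext y; rw [hfour, hzero]; rfl
  have hp00 : ∀ v, 0 < v → p v = 0 := by
    intro v hv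
    have hev : p =ᶠ[𝓝 v] fun t => k (t - ε) := by
      filter_upwards [lt_mem_nhds hv] with t ht
      simp only [p, kp, indicator, mem_Ici]
      rw [if_pos (by linarith)]
    have hc : ContinuousAt p v := by
      apply ContinuousAt.congr _ hev.symm
      fun_prop
    have := hpi.fourierInv_fourier_eq (by rw [hf0]; exact integrable_zero _ _ _) hc
    rw [← this, hf0]
    simp [Real.fourierInv_eq]
  have hk0 : ∀ t, -ε < t → k t = 0 := by
    intro t ht
    have := hp00 (t + ε) (by linarith)
    simp only [p, kp, indicator, mem_Ici] at this
    rw [if_pos (by linarith)] at this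
    simpa using this
  refine absurd hs (notMem_tsupport_iff_eventuallyEq.2 ?_)
  filter_upwards [lt_mem_nhds (show -ε < 0 by linarith)] with t ht using hk0 t ht

theorem lapT_conv {f g : ℝ → ℂ} (hf : Integrable f) (hg : Integrable g) {L M : ℝ}
    (hL : ∀ t, L < |t| → f t = 0) (hM : ∀ t, M < |t| → g t = 0) (z : ℂ) :
    lapT (convR f g) z = lapT f z * lapT g z := by
  have h := integral_convolution (L := ContinuousLinearMap.mul ℂ ℂ) (μ := volume) (ν := volume)
    (lapT_integrable hf hL z) (lapT_integrable hg hM z)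
  rw [ContinuousLinearMap.mul_apply'] at h
  refine Eq.trans ?_ h
  unfold lapT
  congr 1
  ext x
  simp only [convR, convolution, ContinuousLinearMap.mul_apply']
  rw [← integral_mul_const]
  congr 1
  ext t
  have : Complex.exp (z * x) = Complex.exp (z * t) * Complex.exp (z * ((x - t : ℝ) : ℂ)) := by
    rw [← Complex.exp_add]; congr 1; push_cast; ring
  rw [this]
  ring

theorem convR_integrable {f g : ℝ → ℂ} (hf : Integrable f) (hg : Integrable g) :
    Integrable (convR f g) :=
  hf.integrable_convolution (ContinuousLinearMap.mul ℂ ℂ) hg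

theorem exists_abs_bound {f : ℝ → ℂ} (h : HasCompactSupport f) : ∃ L : ℝ, ∀ t, L < |t| → f t = 0 := by
  obtain ⟨L, hL⟩ := (isBounded_iff_forall_norm_le.1 h.isCompact.isBounded)
  refine ⟨L, fun t ht => ?_⟩
  by_contra h0
  exact absurd (hL t (subset_tsupport f h0)) (not_le.2 ht)

theorem core_zero {k l : ℝ → ℂ} (hk : Continuous k) (hl : Continuous l)
    (hck : HasCompactSupport k) (hcl : HasCompactSupport l)
    (hk0 : ∀ t, 0 < t → k t = 0) (hl0 : ∀ t, 0 < t → l t = 0)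
    (hks : (0:ℝ) ∈ tsupport k) (hls : (0:ℝ) ∈ tsupport l)
    {δ : ℝ} (hδ : 0 < δ) (h : ∀ t, -δ < t → convR k l t = 0) : False := by
  have hki : Integrable k := hk.integrable_of_hasCompactSupport hck
  have hli : Integrable l := hl.integrable_of_hasCompactSupport hcl
  obtain ⟨L, hL⟩ := exists_abs_bound hck
  obtain ⟨M, hM⟩ := exists_abs_bound hcl
  have hpos : ∀ k : ℝ → ℂ, Continuous k → HasCompactSupport k → (0:ℝ) ∈ tsupport k → 0 < ∫ t, ‖k t‖ := by
    intro k hk hck hks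
    have hne : ∃ x, k x ≠ 0 := by
      by_contra! hz
      refine absurd hks (notMem_tsupport_iff_eventuallyEq.2 ?_)
      exact Eventually.of_forall hz
    obtain ⟨x, hx⟩ := hne
    exact hk.norm.integral_pos_of_hasCompactSupport_nonneg_nonzero hck.norm (fun t => norm_nonneg _)
      (norm_ne_zero_iff.2 hx)
  have hA := hpos k hk hck hks
  have hB := hpos l hl hcl hls
  have hlowk := fun ε (hε : ε > 0) => lapT_lower hk hL hk0 hks hε
  have hlowl := fun ε (hε : ε > 0) => lapT_lower hl hM hl0 hls hε
  have hupk : ∀ z : ℂ, 0 ≤ z.re → ‖lapT k z‖ ≤ ∫ t, ‖k t‖ := by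
    intro z hz
    simpa using lapT_norm_le hki (z := z) (c := 0) fun t ht =>
      mul_nonpos_of_nonneg_of_nonpos hz (not_lt.1 fun h => ht (hk0 t h))
  have hupl : ∀ z : ℂ, 0 ≤ z.re → ‖lapT l z‖ ≤ ∫ t, ‖l t‖ := by
    intro z hz
    simpa using lapT_norm_le hli (z := z) (c := 0) fun t ht =>
      mul_nonpos_of_nonneg_of_nonpos hz (not_lt.1 fun h => ht (hl0 t h))
  have hconv := lapT_conv hki hli hL hM
  have hci := convR_integrable hki hli
  have hupc : ∀ z : ℂ, 0 ≤ z.re → ‖lapT k z * lapT l z‖ ≤ (∫ t, ‖convR k l t‖) * Real.exp (-δ * z.re) := by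
    intro z hz
    rw [← hconv]
    apply lapT_norm_le hci
    intro t ht
    have : t ≤ -δ := not_lt.1 fun h' => ht (h t h')
    nlinarith
  have hdk := lapT_differentiable hki hL
  have hdl := lapT_differentiable hli hM
  generalize lapT k = F at *
  generalize lapT l = G at *
  generalize (∫ t, ‖k t‖) = A at *
  generalize (∫ t, ‖l t‖) = B at *
  have hC0 : 0 ≤ ∫ t, ‖convR k l t‖ := integral_nonneg fun t => norm_nonneg _
  generalize (∫ t, ‖convR k l t‖) = C at *
  have hnF : ∀ z, ‖F z / A‖ = ‖F z‖ / A := fun z => by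
    rw [norm_div, Complex.norm_real, Real.norm_of_nonneg hA.le]
  have hnG : ∀ z, ‖G z / B‖ = ‖G z‖ / B := fun z => by
    rw [norm_div, Complex.norm_real, Real.norm_of_nonneg hB.le]
  refine core_analytic (F := fun z => F z / A) (G := fun z => G z / B) (δ := δ) (K := C / (A * B))
    (hdk.div_const _) (hdl.div_const _) ?_ ?_ ?_ ?_ hδ ?_
  · intro z hz
    rw [hnF, div_le_one hA]; exact hupk z hz
  · intro z hz
    rw [hnG, div_le_one hB]; exact hupl z hz
  · intro ε hε
    obtain ⟨x, hx, h1⟩ := hlowk ε hε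
    refine ⟨x, hx, ?_⟩
    rw [hnF, le_div_iff₀ hA, mul_comm]; exact h1
  · intro ε hε
    obtain ⟨x, hx, h1⟩ := hlowl ε hε
    refine ⟨x, hx, ?_⟩
    rw [hnG, le_div_iff₀ hB, mul_comm]; exact h1
  · intro z hz
    have h1 := hupc z hz
    rw [norm_mul] at h1
    rw [norm_mul, hnF, hnG, div_mul_div_comm, div_le_iff₀ (mul_pos hA hB), sub_eq_add_neg, Real.exp_add]
    refine h1.trans ?_
    have h2 : C / (A * B) ≤ Real.exp (C / (A * B)) := by
      have := Real.add_one_le_exp (C / (A * B)); linarith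
    have h3 : C ≤ Real.exp (C / (A * B)) * (A * B) := by
      rwa [div_le_iff₀ (mul_pos hA hB)] at h2
    rw [neg_mul]
    calc C * Real.exp (-(δ * z.re)) ≤ (Real.exp (C / (A * B)) * (A * B)) * Real.exp (-(δ * z.re)) := by gcongr
      _ = _ := by ring

theorem sup_part (f g : ℝ → ℂ)
    (hf : Continuous f) (hg : Continuous g)
    (hcf : HasCompactSupport f) (hcg : HasCompactSupport g)
    (hf0 : f ≠ 0) (hg0 : g ≠ 0) :
    convR f g ≠ 0 ∧
    sSup (tsupport (convR f g)) = sSup (tsupport f) + sSup (tsupport g) := by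
  have hz : ∀ f : ℝ → ℂ, HasCompactSupport f → ∀ t, sSup (tsupport f) < t → f t = 0 := by
    intro f hc t ht
    by_contra h
    exact absurd (le_csSup hc.isCompact.bddAbove (subset_tsupport f h)) (not_le.2 ht)
  have hm : ∀ f : ℝ → ℂ, HasCompactSupport f → f ≠ 0 →
      (0:ℝ) ∈ tsupport (fun t => f (t + sSup (tsupport f))) := by
    intro f hc h0
    have hne : (tsupport f).Nonempty := by
      rw [nonempty_iff_ne_empty, Ne, tsupport_eq_empty_iff]; exact h0
    have h1 := hc.isCompact.sSup_mem hne
    by_contra h2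
    rw [notMem_tsupport_iff_eventuallyEq] at h2
    refine absurd h1 (notMem_tsupport_iff_eventuallyEq.2 ?_)
    set a := sSup (tsupport f)
    have : Tendsto (fun t : ℝ => t - a) (𝓝 a) (𝓝 0) := by
      have : Continuous fun t : ℝ => t - a := by fun_prop
      simpa using this.tendsto a
    filter_upwards [this.eventually h2] with t ht
    simpa using ht
  have hzf := hz f hcf
  have hzg := hz g hcg
  have hmf := hm f hcf hf0
  have hmg := hm g hcg hg0
  set a := sSup (tsupport f)
  set b := sSup (tsupport g)
  have hsh : ∀ x, convR (fun t => f (t + a)) (fun t => g (t + b)) x = convR f g (x + (a + b)) := by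
    intro x
    simp only [convR]
    rw [← integral_add_right_eq_self (fun t => f t * g (x + (a + b) - t)) a]
    congr 1
    ext t
    congr 2
    ring
  have hcore : ∀ w, w < a + b → ∃ x, w < x ∧ convR f g x ≠ 0 := by
    intro w hw
    by_contra! hcon
    refine core_zero (k := fun t => f (t + a)) (l := fun t => g (t + b)) (δ := a + b - w)
      (by fun_prop) (by fun_prop) (hcf.comp_homeomorph (Homeomorph.addRight a))
      (hcg.comp_homeomorph (Homeomorph.addRight b)) (fun t ht => hzf _ (by linarith))
      (fun t ht => hzg _ (by linarith)) hmf hmg (by linarith) ?_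
    intro t ht
    rw [hsh]
    exact hcon _ (by linarith)
  have hup : ∀ x, a + b < x → convR f g x = 0 := by
    intro x hx
    simp only [convR]
    rw [← integral_zero ℝ ℂ]
    congr 1
    ext t
    rcases le_or_gt t a with h | h
    · rw [hzg (x - t) (by linarith), mul_zero]
    · rw [hzf t h, zero_mul]
  obtain ⟨x, -, hx⟩ := hcore (a + b - 1) (by linarith)
  refine ⟨fun h => hx (by rw [h]; rfl), ?_⟩
  apply csSup_eq_of_forall_le_of_forall_lt_exists_gt
  · exact ⟨x, subset_tsupport _ hx⟩
  · intro y hy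
    by_contra! h
    refine absurd hy (notMem_tsupport_iff_eventuallyEq.2 ?_)
    filter_upwards [lt_mem_nhds h] with t ht using hup t ht
  · intro w hw
    obtain ⟨y, hy1, hy2⟩ := hcore w hw
    exact ⟨y, subset_tsupport _ hy2, hy1⟩

theorem tsupport_neg_arg (f : ℝ → ℂ) : tsupport (fun t => f (-t)) = -tsupport f := by
  have := tsupport_comp_eq_preimage f (Homeomorph.neg ℝ)
  exact this

end Helpers

/-- The Titchmarsh convolution theorem. -/
theorem titchmarsh_convolution (f g : ℝ → ℂ)
    (hf : Continuous f) (hg : Continuous g)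
    (hcf : HasCompactSupport f) (hcg : HasCompactSupport g)
    (hf0 : f ≠ 0) (hg0 : g ≠ 0) :
    convR f g ≠ 0 ∧
    sInf (tsupport (convR f g)) = sInf (tsupport f) + sInf (tsupport g) ∧
    sSup (tsupport (convR f g)) = sSup (tsupport f) + sSup (tsupport g) := by
  obtain ⟨h1, h2⟩ := sup_part f g hf hg hcf hcg hf0 hg0
  have hne : ∀ f : ℝ → ℂ, f ≠ 0 → (fun t => f (-t)) ≠ 0 := by
    intro f h h0
    apply h
    ext t
    simpa using congrFun h0 (-t)
  obtain ⟨-, h3⟩ := sup_part (fun t => f (-t)) (fun t => g (-t)) (by fun_prop) (by fun_prop)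
    (hcf.comp_homeomorph (Homeomorph.neg ℝ)) (hcg.comp_homeomorph (Homeomorph.neg ℝ))
    (hne f hf0) (hne g hg0)
  have h4 : convR (fun t => f (-t)) (fun t => g (-t)) = fun x => convR f g (-x) := by
    ext x
    simp only [convR]
    rw [← integral_neg_eq_self (fun t => f t * g (-x - t))]
    congr 1
    ext t
    congr 2
    ring
  rw [h4, tsupport_neg_arg, tsupport_neg_arg, tsupport_neg_arg] at h3
  simp only [Real.sSup_neg] at h3
  exact ⟨h1, by linarith, h2⟩

end
end

section
/- (Titchmarsh theorem for distributions on a circle, continuous-function version.) Let n ≥ 2 and let f, g : 𝕋 → ℂ be continuous functions on 𝕋 = AddCircle (2π). Let a_I ≤ b_I and a_J ≤ b_J be real numbers with (b_I − a_I) + (b_J − a_J) < 2π/n, and set I = π_*([a_I, b_I]), J = π_*([a_J, b_J]). Assume supp f ⊆ R_n(I) and that there is no strictly smaller closed subinterval I' = π_*([a', b']) (with a_I ≤ a', b' ≤ b_I, and (a', b') ≠ (a_I, b_I)) with supp f ⊆ R_n(I'); assume the analogous conditions for g with J. Let a_K, b_K be reals with a_I + a_J ≤ a_K ≤ b_K ≤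 b_I + b_J and supp (f ⋆ g) ⊆ R_n(π_*([a_K, b_K])), and set λ = a_K − a_I − a_J. If λ > 0, then there exist α, β ∈ ℂ with α^n = β^n = 1 and α ≠ β such that: (i) the function F_α = ∑_{k=0}^{n−1} α^k S_{2πk/n} f vanishes on π_*((b_I − 2π/n, a_I + λ)); (ii) G_α = ∑_{k=0}^{n−1} α^k S_{2πk/n} g vanishes on π_*((b_J − 2π/n, a_J)) and π_*(a_J) ∈ supp G_α; (iii) F_β = ∑_{k=0}^{n−1} β^k S_{2πk/n} f vanishes on π_*((b_I − 2π/n, a_I)) and π_*(a_I) ∈ supp F_β; (iv) G_β = ∑_{k=0}^{n−1} β^k S_{2πk/n} g vanishes on π_*((b_J − 2π/n, a_J + λ)). -/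
open MeasureTheory Real Set Pointwise

noncomputable section

abbrev 𝕋 : Type := AddCircle (2 * π)

instance : Fact (0 < 2 * π) := ⟨by positivity⟩

/-- Natural projection `ℝ → 𝕋`. -/
def proj : ℝ → 𝕋 := fun r => (r : 𝕋)

/-- Convolution of functions on the circle with respect to Haar (Lebesgue) measure. -/
def circConv (f g : 𝕋 → ℂ) : 𝕋 → ℂ := fun x => ∫ t : 𝕋, f t * g (x - t)

/-- Shift operator `(S_y f)(x) = f (x - y)`. -/
def shift (y : 𝕋) (f : 𝕋 → ℂ) : 𝕋 → ℂ := fun x => f (x - y)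

/-- `Rn n A = ⋃_{k=0}^{n-1} (π_*(2πk/n) + A)`. -/
def Rn (n : ℕ) (A : Set 𝕋) : Set 𝕋 :=
  ⋃ k ∈ Finset.range n, (proj (2 * π * k / n) +ᵥ A)


def Dec (φ : ℝ → ℂ) (a : ℝ) : Prop := ∃ C, ∀ x : ℝ, 0 ≤ x → ‖φ x‖ ≤ C * Real.exp (-a * x)

lemma Dec.mono {φ : ℝ → ℂ} {a b : ℝ} (hab : a ≤ b) (h : Dec φ b) : Dec φ a := by
  obtain ⟨C, hC⟩ := h
  have hC0 : 0 ≤ C := by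
    have := hC 0 le_rfl
    simp at this
    exact (norm_nonneg _).trans this
  refine ⟨C, fun x hx => (hC x hx).trans ?_⟩
  gcongr

lemma Dec.mul {φ ψ : ℝ → ℂ} {a b : ℝ} (h : Dec φ a) (h' : Dec ψ b) :
    Dec (fun x => φ x * ψ x) (a + b) := by
  obtain ⟨C, hC⟩ := h
  obtain ⟨D, hD⟩ := h'
  refine ⟨C * D, fun x hx => ?_⟩
  rw [norm_mul]
  calc ‖φ x‖ * ‖ψ x‖ ≤ (C * Real.exp (-a * x)) * (D * Real.exp (-b * x)) :=
        mul_le_mul (hC x hx) (hD x hx) (norm_nonneg _) ((norm_nonneg _).trans (hC x hx))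
    _ = C * D * Real.exp (-(a + b) * x) := by
        rw [show -(a + b) * x = -a * x + -b * x by ring, Real.exp_add]; ring

lemma Dec.add {φ ψ : ℝ → ℂ} {a : ℝ} (h : Dec φ a) (h' : Dec ψ a) :
    Dec (fun x => φ x + ψ x) a := by
  obtain ⟨C, hC⟩ := h
  obtain ⟨D, hD⟩ := h'
  refine ⟨C + D, fun x hx => (norm_add_le _ _).trans ?_⟩
  rw [add_mul]
  exact add_le_add (hC x hx) (hD x hx)

lemma Dec.const_mul {φ : ℝ → ℂ} {a : ℝ} (c : ℂ) (h : Dec φ a) : Dec (fun x => c * φ x) a := by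
  obtain ⟨C, hC⟩ := h
  refine ⟨‖c‖ * C, fun x hx => ?_⟩
  rw [norm_mul, mul_assoc]
  gcongr
  exact hC x hx

lemma Dec.sum {ι : Type*} (s : Finset ι) {φ : ι → ℝ → ℂ} {a : ℝ} (h : ∀ i ∈ s, Dec (φ i) a) :
    Dec (fun x => ∑ i ∈ s, φ i x) a := by
  classical
  induction s using Finset.induction_on with
  | empty => exact ⟨0, by simp⟩
  | insert i s hi ih =>
    simp only [Finset.sum_insert hi]
    exact (h i (by simp)).add (ih fun j hj => h j (by simp [hj]))

lemma Dec.of_sq {φ : ℝ → ℂ} {a : ℝ} (h : Dec (fun x => φ x * φ x) (2 * a)) : Dec φ a := by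
  obtain ⟨C, hC⟩ := h
  have hC0 : 0 ≤ C := by
    have := hC 0 le_rfl
    simp at this
    exact (by positivity : 0 ≤ ‖φ 0‖ * ‖φ 0‖).trans this
  refine ⟨√C, fun x hx => ?_⟩
  have := hC x hx
  rw [norm_mul, show -(2 * a) * x = -a * x + -a * x by ring, Real.exp_add] at this
  refine abs_le_of_sq_le_sq' ?_ (by positivity) |>.2
  rw [mul_pow, Real.sq_sqrt hC0]
  nlinarith

/-- Strict sums: a sum of functions decaying at rates beating `a` decays at some rate beating `a`. -/
lemma Dec.sum_gt {ι : Type*} (s : Finset ι) {φ : ι → ℝ → ℂ} {a : ℝ}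
    (h : ∀ i ∈ s, ∃ b > a, Dec (φ i) b) :
    ∃ b > a, Dec (fun x => ∑ i ∈ s, φ i x) b := by
  classical
  induction s using Finset.induction_on with
  | empty => exact ⟨a + 1, by linarith, 0, by simp⟩
  | insert i s hi ih =>
    simp only [Finset.sum_insert hi]
    obtain ⟨b, hb, h1⟩ := h i (by simp)
    obtain ⟨b', hb', h2⟩ := ih fun j hj => h j (by simp [hj])
    exact ⟨min b b', lt_min hb hb', (h1.mono (min_le_left _ _)).add (h2.mono (min_le_right _ _))⟩

lemma dec_alg (F G : ℕ → ℝ → ℂ) (hF : ∀ i, Dec (F i) 0) (hG : ∀ i, Dec (G i) 0) (c : ℝ)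
    (hc : 0 < c)
    (hH : ∀ n : ℕ, Dec (fun x => ∑ k ∈ Finset.range (n + 1),
      (n.choose k : ℂ) * (F k x * G (n - k) x)) c) (i j : ℕ) (a : ℝ) (ha : a < c) :
    Dec (fun x => F i x * G j x) a := by
  classical
  set S : ℕ → ℕ → Set ℝ := fun i j => {a | a ≤ c ∧ Dec (fun x => F i x * G j x) a} with hS
  set m : ℕ → ℕ → ℝ := fun i j => sSup (S i j) with hm
  have hS0 : ∀ i j, (0 : ℝ) ∈ S i j := fun i j =>
    ⟨hc.le, by simpa using (hF i).mul (hG j)⟩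
  have hSb : ∀ i j, BddAbove (S i j) := fun i j => ⟨c, fun x hx => hx.1⟩
  have hm0 : ∀ i j, 0 ≤ m i j := fun i j => le_csSup (hSb i j) (hS0 i j)
  have hmlt : ∀ i j a, a < m i j → Dec (fun x => F i x * G j x) a := by
    intro i j a h
    obtain ⟨b, hb, hab⟩ := exists_lt_of_lt_csSup ⟨0, hS0 i j⟩ h
    exact hb.2.mono hab.le
  by_cases hij : c ≤ m i j
  · exact hmlt i j a (ha.trans_le hij)
  exfalso
  push Not at hij
  obtain ⟨ε, hε, hε'⟩ : ∃ ε > 0, m i j + (i + j) * ε < c := by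
    refine ⟨(c - m i j) / (2 * (i + j + 1)), div_pos (by linarith) (by positivity), ?_⟩
    have : ((i : ℝ) + j) * ((c - m i j) / (2 * (i + j + 1))) ≤ (c - m i j) / 2 := by
      rw [mul_div_assoc', div_le_div_iff₀ (by positivity) (by positivity)]
      nlinarith
    linarith
  set M : ℕ × ℕ → ℝ := fun p => m p.1 p.2 + (p.1 + p.2) * ε with hM
  obtain ⟨N0, hN0⟩ := exists_nat_ge (c / ε)
  set N := N0 + i + j
  have hN : c ≤ N * ε := by
    rw [div_le_iff₀ hε] at hN0
    have : (N0 : ℝ) ≤ N := by exact_mod_cast (by omega : N0 ≤ N)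
    nlinarith
  obtain ⟨p, hp, hpmin⟩ := Finset.exists_min_image (Finset.range (N + 1) ×ˢ Finset.range (N + 1))
    (fun p : ℕ × ℕ => toLex (M p, toLex (p.1, p.2))) ⟨(i, j), by simp [N]; omega⟩
  have hpmin' : ∀ q, M p ≤ M q ∧ (M p = M q → toLex (p.1, p.2) ≤ toLex (q.1, q.2)) := by
    have hfin : ∀ q ∈ Finset.range (N + 1) ×ˢ Finset.range (N + 1),
        M p ≤ M q ∧ (M p = M q → toLex (p.1, p.2) ≤ toLex (q.1, q.2)) := by
      intro q hq
      have := hpmin q hq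
      rw [Prod.Lex.toLex_le_toLex'] at this
      exact this
    intro q
    by_cases hq : q ∈ Finset.range (N + 1) ×ˢ Finset.range (N + 1)
    · exact hfin q hq
    · have h1 : M p ≤ M (i, j) := (hfin (i, j) (by simp [N]; omega)).1
      have h2 : (N : ℝ) ≤ q.1 + q.2 := by
        simp at hq
        have : N ≤ q.1 + q.2 := by omega
        exact_mod_cast this
      have h3 : M p < M q := by
        have := hm0 q.1 q.2
        have h4 : c ≤ M q := by
          simp only [hM]; nlinarith
        have h5 : M (i, j) < c := hε'
        linarith
      exact ⟨h3.le, fun h => absurd h h3.ne⟩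
  obtain ⟨i', j'⟩ := p
  have hMc : M (i', j') < c := (hpmin' (i, j)).1.trans_lt hε'
  have hk : ∀ k < i', M (i', j') < M (k, j') := by
    intro k hk
    refine lt_of_le_of_ne (hpmin' _).1 fun h => ?_
    have := (hpmin' _).2 h
    rw [Prod.Lex.toLex_le_toLex'] at this
    simp at this
    omega
  have hl : ∀ l < j', M (i', j') < M (i', l) := by
    intro k hk
    refine lt_of_le_of_ne (hpmin' _).1 fun h => ?_
    have := (hpmin' _).2 h
    rw [Prod.Lex.toLex_le_toLex'] at this
    simp at this
    omega
  have hmc : m i' j' < c := by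
    have : 0 ≤ ((i' : ℝ) + j') * ε := by positivity
    simp only [hM] at hMc
    linarith
  -- the key decay estimate
  have key : ∃ b > 2 * m i' j', Dec (fun x => (F i' x * G j' x) * (F i' x * G j' x)) b := by
    have h1 : ∃ b > 2 * m i' j', Dec (fun x => (F i' x * G j' x) *
        ∑ k ∈ Finset.range (i' + j' + 1),
        ((i' + j').choose k : ℂ) * (F k x * G (i' + j' - k) x)) b := by
      refine ⟨(m i' j' - (c - m i' j') / 2) + c, by linarith, ?_⟩
      exact (hmlt i' j' _ (by linarith)).mul (hH _)
    have h2 : ∃ b > 2 * m i' j', Dec (fun x =>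
        ∑ k ∈ (Finset.range (i' + j' + 1)).erase i',
        ((i' + j').choose k : ℂ) * ((F k x * G j' x) * (F i' x * G (i' + j' - k) x))) b := by
      apply Dec.sum_gt
      intro k hk'
      simp at hk'
      obtain ⟨hk1, hk2⟩ := hk'
      have hkl : ((k : ℝ) + (i' + j' - k : ℕ)) = i' + j' := by
        have : k + (i' + j' - k) = i' + j' := by omega
        exact_mod_cast this
      have hlt : 2 * M (i', j') < M (k, j') + M (i', i' + j' - k) := by
        rcases lt_or_gt_of_ne hk1 with h | h
        · have := hk k h
          have := (hpmin' (i', i' + j' - k)).1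
          linarith
        · have := hl (i' + j' - k) (by omega)
          have := (hpmin' (k, j')).1
          linarith
      have hlt2 : 2 * m i' j' < m k j' + m i' (i' + j' - k) := by
        simp only [hM] at hlt
        have h3 : ((k : ℝ) + j') * ε + (i' + (i' + j' - k : ℕ)) * ε = 2 * ((i' + j') * ε) := by
          linear_combination ε * hkl
        linarith
      set η := (m k j' + m i' (i' + j' - k) - 2 * m i' j') / 4 with hη
      have hηp : 0 < η := by rw [hη]; linarith
      refine ⟨(m k j' - η) + (m i' (i' + j' - k) - η), by linarith, ?_⟩
      exact ((hmlt k j' _ (by linarith)).mul (hmlt i' _ _ (by linarith))).const_mul _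
    obtain ⟨b1, hb1, h1⟩ := h1
    obtain ⟨b2, hb2, h2⟩ := h2
    refine ⟨min b1 b2, lt_min hb1 hb2, ?_⟩
    have h3 := ((h1.mono (min_le_left b1 b2)).add
      ((h2.mono (min_le_right b1 b2)).const_mul (-1))).const_mul (((i' + j').choose i' : ℂ)⁻¹)
    convert h3 using 2 with x
    have hch : ((i' + j').choose i' : ℂ) ≠ 0 := by
      exact_mod_cast (Nat.choose_pos (by omega)).ne'
    have e : F i' x * G j' x * ∑ k ∈ Finset.range (i' + j' + 1),
        ((i' + j').choose k : ℂ) * (F k x * G (i' + j' - k) x) =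
        ((i' + j').choose i' : ℂ) * ((F i' x * G j' x) * (F i' x * G j' x)) +
        ∑ k ∈ (Finset.range (i' + j' + 1)).erase i',
        ((i' + j').choose k : ℂ) * ((F k x * G j' x) * (F i' x * G (i' + j' - k) x)) := by
      rw [Finset.mul_sum, ← Finset.add_sum_erase (Finset.range (i' + j' + 1)) _
        (show i' ∈ Finset.range (i' + j' + 1) by simp)]
      rw [Nat.add_sub_cancel_left]
      congr 1
      · ring
      · exact Finset.sum_congr rfl fun k _ => by ring
    rw [e]
    field_simp
    ring
  obtain ⟨b, hb, hbD⟩ := key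
  have hD : Dec (fun x => F i' x * G j' x) (b / 2) :=
    Dec.of_sq (by rwa [show 2 * (b / 2) = b by ring])
  have : min (b / 2) c ≤ m i' j' :=
    le_csSup (hSb i' j') ⟨min_le_right _ _, hD.mono (min_le_left _ _)⟩
  have : m i' j' < min (b / 2) c := lt_min (by linarith) hmc
  linarith
open Filter Topology FourierTransform

lemma phrag_diff (u : ℝ → ℂ) (hu : Continuous u) (a : ℝ) :
    Differentiable ℂ (fun z : ℂ => ∫ t in (0:ℝ)..a, Complex.exp (z * (a - t)) * u t) := by
  intro z₀
  have hcont : Continuous fun p : ℂ × ℝ => Complex.exp (p.1 * (a - p.2)) * ((a - p.2) * u p.2) := by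
    fun_prop
  obtain ⟨K, hK⟩ := ((isCompact_closedBall z₀ 1).prod (isCompact_uIcc (a := 0) (b := a))).exists_bound_of_continuousOn
    hcont.continuousOn
  refine (intervalIntegral.hasDerivAt_integral_of_dominated_loc_of_deriv_le
    (F' := fun z t => Complex.exp (z * (a - t)) * ((a - t) * u t)) (bound := fun _ => K)
    (Metric.closedBall_mem_nhds z₀ one_pos) ?_ ?_ ?_ ?_ ?_ ?_).2.differentiableAt
  · exact Eventually.of_forall fun z => (by fun_prop : Continuous fun t : ℝ => Complex.exp (z * (a - t)) * u t).aestronglyMeasurable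
  · exact (by fun_prop : Continuous fun t : ℝ => Complex.exp (z₀ * (a - t)) * u t).intervalIntegrable _ _
  · exact (by fun_prop : Continuous fun t : ℝ => Complex.exp (z₀ * (a - t)) * ((a - t) * u t)).aestronglyMeasurable
  · exact Eventually.of_forall fun t ht z hz => hK (z, t) ⟨hz, uIoc_subset_uIcc ht⟩
  · exact intervalIntegrable_const
  · refine Eventually.of_forall fun t ht z hz => ?_
    have h1 : HasDerivAt (fun z : ℂ => z * ((a : ℂ) - t)) ((a : ℂ) - t) z := by
      simpa using (hasDerivAt_id z).mul_const ((a : ℂ) - t)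
    have := (h1.cexp).mul_const (u t)
    rw [mul_assoc] at this
    exact this

lemma phrag_norm (z : ℂ) (s : ℝ) : ‖Complex.exp (z * s)‖ = Real.exp (z.re * s) := by
  rw [Complex.norm_exp]; simp

lemma phragmen (u : ℝ → ℂ) (hu : Continuous u) (B : ℝ) (hB : ∀ t, t ∉ Icc 0 B → u t = 0)
    (a : ℝ) (ha : 0 < a) (C : ℝ)
    (hC : ∀ x : ℝ, 0 ≤ x → ‖∫ t : ℝ, Complex.exp (-(x : ℂ) * t) * u t‖ ≤ C * Real.exp (-a * x)) :
    ∀ t < a, u t = 0 := by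
  set Φ : ℂ → ℂ := fun z : ℂ => ∫ t in (0:ℝ)..a, Complex.exp (z * (a - t)) * u t with hΦ
  have hd : Differentiable ℂ Φ := phrag_diff u hu a
  set B' := max B a with hB'
  have haB : a ≤ B' := le_max_right _ _
  obtain ⟨K, hK⟩ := (isCompact_Icc (a := 0) (b := B')).exists_bound_of_continuousOn hu.continuousOn
  have hK0 : 0 ≤ K := (norm_nonneg _).trans (hK 0 ⟨le_rfl, ha.le.trans haB⟩)
  have hbd : ∀ z : ℂ, ‖Φ z‖ ≤ Real.exp (a * ‖z‖) * K * a := by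
    intro z
    have := intervalIntegral.norm_integral_le_of_norm_le_const (a := 0) (b := a)
      (f := fun t : ℝ => Complex.exp (z * (a - t)) * u t) (C := Real.exp (a * ‖z‖) * K) (by
        intro t ht
        rw [uIoc_of_le ha.le] at ht
        rw [norm_mul]
        have h1 := phrag_norm z (a - t)
        push_cast at h1
        rw [h1]
        have h2 : z.re * (a - t) ≤ a * ‖z‖ := by
          have := Complex.re_le_norm z
          have h0 := norm_nonneg z
          have := ht.1; have := ht.2
          nlinarith
        gcongr
        exact hK t ⟨ht.1.le, ht.2.trans haB⟩)
    simpa [abs_of_pos ha] using this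
  have hleft : ∀ z : ℂ, z.re ≤ 0 → ‖Φ z‖ ≤ K * a := by
    intro z hz
    have := intervalIntegral.norm_integral_le_of_norm_le_const (a := 0) (b := a)
      (f := fun t : ℝ => Complex.exp (z * (a - t)) * u t) (C := 1 * K) (by
        intro t ht
        rw [uIoc_of_le ha.le] at ht
        rw [norm_mul]
        have h1 := phrag_norm z (a - t)
        push_cast at h1
        rw [h1]
        have h2 : Real.exp (z.re * (a - t)) ≤ 1 := by
          rw [Real.exp_le_one_iff]
          have := ht.2
          nlinarith
        gcongr
        exact hK t ⟨ht.1.le, ht.2.trans haB⟩)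
    simpa [abs_of_pos ha] using this
  have hreal : ∀ x : ℝ, 0 ≤ x → ‖Φ x‖ ≤ C + K * (B' - a) := by
    intro x hx
    have hinteg : ∀ p q : ℝ, IntervalIntegrable (fun t : ℝ => Complex.exp (x * (a - t)) * u t) volume p q :=
      fun p q => (by fun_prop : Continuous fun t : ℝ => Complex.exp (x * (a - t)) * u t).intervalIntegrable _ _
    have h1 : Φ x + ∫ t in a..B', Complex.exp (x * (a - t)) * u t =
        Complex.exp (x * a) * ∫ t : ℝ, Complex.exp (-(x : ℂ) * t) * u t := by
      simp only [hΦ]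
      rw [intervalIntegral.integral_add_adjacent_intervals (hinteg _ _) (hinteg _ _),
        intervalIntegral.integral_of_le (ha.le.trans haB), ← integral_Icc_eq_integral_Ioc,
        setIntegral_eq_integral_of_forall_compl_eq_zero, ← integral_const_mul]
      · congr 1
        ext t
        rw [← mul_assoc, ← Complex.exp_add]
        congr 2; ring
      · intro t ht
        rw [hB t fun h => ht ⟨h.1, h.2.trans (le_max_left _ _)⟩, mul_zero]
    have h2 : ‖∫ t in a..B', Complex.exp (x * (a - t)) * u t‖ ≤ K * (B' - a) := by
      have := intervalIntegral.norm_integral_le_of_norm_le_const (a := a) (b := B')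
        (f := fun t : ℝ => Complex.exp (x * (a - t)) * u t) (C := 1 * K) (by
        intro t ht
        rw [uIoc_of_le haB] at ht
        rw [norm_mul]
        have h1 := phrag_norm x (a - t)
        push_cast at h1
        rw [h1]
        have h2 : Real.exp ((x : ℂ).re * (a - t)) ≤ 1 := by
          rw [Real.exp_le_one_iff]
          have := ht.1
          simp
          nlinarith
        gcongr
        exact hK t ⟨ha.le.trans ht.1.le, ht.2⟩)
      simpa [abs_of_nonneg (sub_nonneg.2 haB)] using this
    have h3 : ‖Complex.exp (x * a) * ∫ t : ℝ, Complex.exp (-(x : ℂ) * t) * u t‖ ≤ C := by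
      rw [norm_mul, phrag_norm]
      calc _ ≤ Real.exp ((x:ℂ).re * a) * (C * Real.exp (-a * x)) := by
              gcongr; exact hC x hx
        _ = C * Real.exp ((x:ℂ).re * a + -a * x) := by rw [Real.exp_add]; ring
        _ = C := by simp [mul_comm]
    rw [eq_sub_of_add_eq h1]
    exact (norm_sub_le _ _).trans (add_le_add h3 h2)
  have hright : ∀ z : ℂ, 0 ≤ z.re → ‖Φ z‖ ≤ K * a := by
    intro z hz
    refine PhragmenLindelof.right_half_plane_of_bounded_on_real hd.diffContOnCl
      ⟨1, by norm_num, a, ?_⟩ ?_ ?_ hz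
    · refine Asymptotics.IsBigO.of_bound (K * a) (Eventually.of_forall fun z => ?_)
      rw [Real.norm_of_nonneg (Real.exp_pos _).le, Real.rpow_one]
      exact (hbd z).trans_eq (by ring)
    · refine ⟨C + K * (B' - a), ?_⟩
      rw [eventually_map]
      filter_upwards [eventually_ge_atTop 0] with x hx using hreal x hx
    · intro x
      exact hleft _ (by simp)
  have hconst : ∀ z, Φ z = Φ 0 := by
    intro z
    apply hd.apply_eq_apply_of_bounded
    rw [isBounded_iff_forall_norm_le]
    refine ⟨K * a, ?_⟩
    rintro _ ⟨z, rfl⟩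
    rcases le_total z.re 0 with h | h
    · exact hleft z h
    · exact hright z h
  set φ : ℝ → ℂ := indicator (Ioc 0 a) u with hφ
  have hφi : Integrable φ := by
    rw [hφ, integrable_indicator_iff measurableSet_Ioc]
    exact (hu.integrableOn_Icc).mono_set Ioc_subset_Icc_self
  have hF : ∀ w : ℝ, Complex.exp (2 * π * Complex.I * w * a) * 𝓕 φ w = Φ 0 := by
    intro w
    rw [← hconst (2 * π * Complex.I * w), Real.fourier_eq']
    simp only [hΦ]
    rw [intervalIntegral.integral_of_le ha.le, ← integral_indicator measurableSet_Ioc,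
      ← integral_const_mul]
    congr 1
    ext t
    by_cases ht : t ∈ Ioc 0 a
    · simp only [hφ, indicator_of_mem ht, smul_eq_mul]
      rw [← mul_assoc, ← Complex.exp_add]
      congr 2
      simp
      ring
    · simp [hφ, indicator_of_notMem ht]
  have hFn : ∀ w : ℝ, ‖𝓕 φ w‖ = ‖Φ 0‖ := by
    intro w
    rw [← hF w, norm_mul, Complex.norm_exp]
    simp
  have hΦ0 : Φ 0 = 0 := by
    have h1 := (Real.zero_at_infty_fourier φ).norm
    simp only [hFn, norm_zero] at h1
    exact norm_eq_zero.1 (tendsto_nhds_unique tendsto_const_nhds h1)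
  have hF0 : 𝓕 φ = 0 := by
    ext w
    have := hFn w
    rw [hΦ0] at this
    simpa using this
  have hioo : ∀ t ∈ Ioo 0 a, u t = 0 := by
    intro t ht
    have hc : φ =ᶠ[𝓝 t] u := by
      filter_upwards [Ioo_mem_nhds ht.1 ht.2] with s hs
      exact indicator_of_mem (Ioo_subset_Ioc_self hs) _
    have h1 := hφi.fourierInv_fourier_eq (by rw [hF0]; exact integrable_zero _ _ _)
      (hu.continuousAt.congr hc.symm : ContinuousAt φ t)
    rw [hF0] at h1
    rw [← hc.eq_of_nhds, ← h1, Real.fourierInv_eq]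
    simp
  intro t ht
  rcases lt_trichotomy t 0 with h | h | h
  · exact hB t fun h' => absurd h'.1 (not_le.2 h)
  · have h0 : t ∈ closure (Ioo 0 a) := by
      rw [closure_Ioo ha.ne]; exact ⟨h.ge, ht.le⟩
    have : closure (Ioo 0 a) ⊆ {t | u t = 0} :=
      closure_minimal hioo (isClosed_eq hu continuous_const)
    exact this h0
  · exact hioo t ⟨h, ht⟩

lemma moments_real (ψ : ℝ → ℝ) (hψ : Continuous ψ) (B : ℝ) (hB : ∀ t, t ∉ Icc 0 B → ψ t = 0)
    (h : ∀ j : ℕ, ∫ t : ℝ, t ^ j * ψ t = 0) : ∀ t, ψ t = 0 := by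
  have hcs : HasCompactSupport ψ := HasCompactSupport.intro isCompact_Icc (fun t ht => hB t ht)
  have hinteg : ∀ q : ℝ → ℝ, Continuous q → Integrable fun t => q t * ψ t := fun q hq =>
    (hq.mul hψ).integrable_of_hasCompactSupport hcs.mul_left
  have hpoly : ∀ p : Polynomial ℝ, ∫ t : ℝ, p.eval t * ψ t = 0 := by
    intro p
    simp only [Polynomial.eval_eq_sum_range, Finset.sum_mul]
    rw [integral_finsetSum]
    · refine Finset.sum_eq_zero fun i _ => ?_
      simp only [mul_assoc]
      rw [integral_const_mul, h, mul_zero]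
    · intro i _
      exact hinteg (fun t => p.coeff i * t ^ i) (by fun_prop)
  have hsq : ∫ t, ψ t * ψ t = 0 := by
    refine le_antisymm ?_ (integral_nonneg fun t => mul_self_nonneg _)
    have hmain : ∀ ε > 0, ∫ t, ψ t * ψ t ≤ ε * ∫ t, |ψ t| := by
      intro ε hε
      obtain ⟨p, hp⟩ := exists_polynomial_near_of_continuousOn 0 B ψ hψ.continuousOn ε hε
      have e : ∫ t, ψ t * ψ t = ∫ t, (ψ t - p.eval t) * ψ t := by
        simp only [sub_mul]
        rw [integral_sub (hinteg _ hψ) (hinteg _ p.continuous), hpoly, sub_zero]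
      rw [e, ← integral_const_mul]
      refine integral_mono (hinteg _ (hψ.sub p.continuous)) ?_ ?_
      · exact ((hψ.integrable_of_hasCompactSupport hcs).abs).const_mul ε
      · intro t
        by_cases ht : t ∈ Icc 0 B
        · have := hp t ht
          rw [abs_sub_comm] at this
          calc (ψ t - p.eval t) * ψ t ≤ |(ψ t - p.eval t) * ψ t| := le_abs_self _
            _ = |ψ t - p.eval t| * |ψ t| := abs_mul _ _
            _ ≤ ε * |ψ t| := by gcongr
        · simp [hB t ht]
    have hI : 0 ≤ ∫ t, |ψ t| := integral_nonneg fun t => abs_nonneg _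
    refine le_of_forall_pos_le_add fun δ hδ => ?_
    have := hmain (δ / ((∫ t, |ψ t|) + 1)) (by positivity)
    refine this.trans ?_
    rw [div_mul_eq_mul_div, div_le_iff₀ (by positivity)]
    nlinarith
  rw [integral_eq_zero_iff_of_nonneg (fun t => mul_self_nonneg _) (hinteg _ hψ)] at hsq
  have := (hψ.mul hψ).ae_eq_iff_eq volume continuous_const |>.1 hsq
  intro t
  exact mul_self_eq_zero.1 (congrFun this t)

lemma moments (φ : ℝ → ℂ) (hφ : Continuous φ) (B : ℝ) (hB : ∀ t, t ∉ Icc 0 B → φ t = 0)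
    (h : ∀ j : ℕ, ∫ t : ℝ, (t : ℂ) ^ j * φ t = 0) : ∀ t, φ t = 0 := by
  have hcs : HasCompactSupport φ := HasCompactSupport.intro isCompact_Icc (fun t ht => hB t ht)
  have hinteg : ∀ j : ℕ, Integrable fun t : ℝ => (t : ℂ) ^ j * φ t := fun j =>
    (by fun_prop : Continuous fun t : ℝ => (t : ℂ) ^ j * φ t).integrable_of_hasCompactSupport
      hcs.mul_left
  have hre := moments_real (fun t => (φ t).re) (by fun_prop) B (fun t ht => by simp [hB t ht])
    (fun j => by
      have := Complex.reCLM.integral_comp_comm (hinteg j)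
      rw [h j] at this
      simpa [← Complex.ofReal_pow] using this)
  have him := moments_real (fun t => (φ t).im) (by fun_prop) B (fun t ht => by simp [hB t ht])
    (fun j => by
      have := Complex.imCLM.integral_comp_comm (hinteg j)
      rw [h j] at this
      simpa [← Complex.ofReal_pow] using this)
  intro t
  exact Complex.ext (hre t) (him t)

def lap (u : ℝ → ℂ) (x : ℝ) : ℂ := ∫ t : ℝ, Complex.exp (-(x : ℂ) * t) * u t

def lconv (u w : ℝ → ℂ) (x : ℝ) : ℂ := ∫ t : ℝ, u t * w (x - t)

lemma lap_lconv {u w : ℝ → ℂ} (hu : Continuous u) (hw : Continuous w) (hcu : HasCompactSupport u)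
    (hcw : HasCompactSupport w) (x : ℝ) : lap (lconv u w) x = lap u x * lap w x := by
  have hi : ∀ u : ℝ → ℂ, Continuous u → HasCompactSupport u →
      Integrable fun t : ℝ => Complex.exp (-(x : ℂ) * t) * u t := fun u hu hcu =>
    (by fun_prop : Continuous fun t : ℝ =>
      Complex.exp (-(x : ℂ) * t) * u t).integrable_of_hasCompactSupport hcu.mul_left
  have := integral_convolution (μ := volume) (ν := volume) (ContinuousLinearMap.mul ℂ ℂ) (hi u hu hcu) (hi w hw hcw)
  simp only [ContinuousLinearMap.mul_apply'] at this
  unfold lap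
  rw [← this]
  congr 1
  ext s
  rw [convolution_def, lconv, ← integral_const_mul]
  congr 1
  ext t
  simp only [ContinuousLinearMap.mul_apply']
  rw [show -(x : ℂ) * s = -(x : ℂ) * t + -(x : ℂ) * (s - t : ℝ) by push_cast; ring, Complex.exp_add]
  ring

lemma lconv_continuous {u w : ℝ → ℂ} (hu : Continuous u) (hw : Continuous w)
    (hcw : HasCompactSupport w) : Continuous (lconv u w) :=
  hcw.continuous_convolution_right (ContinuousLinearMap.mul ℂ ℂ) (μ := volume)
    hu.locallyIntegrable hw

lemma lconv_supp {u w : ℝ → ℂ} {a b a' b' : ℝ} (hu : ∀ t, t ∉ Icc a b → u t = 0)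
    (hw : ∀ t, t ∉ Icc a' b' → w t = 0) : ∀ x, x ∉ Icc (a + a') (b + b') → lconv u w x = 0 := by
  intro x hx
  unfold lconv
  rw [← integral_zero ℝ ℂ]
  congr 1
  ext t
  by_cases h : t ∈ Icc a b
  · rw [hw (x - t), mul_zero]
    intro h'
    exact hx ⟨by linarith [h.1, h'.1], by linarith [h.2, h'.2]⟩
  · rw [hu t h, zero_mul]

/-- Decay of the Laplace transform of a function supported in `[c, b]`. -/
lemma lap_dec {u : ℝ → ℂ} (hu : Continuous u) {c b : ℝ} (h : ∀ t, t ∉ Icc c b → u t = 0) :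
    Dec (lap u) c := by
  have hcs : HasCompactSupport u := HasCompactSupport.intro isCompact_Icc (fun t ht => h t ht)
  refine ⟨∫ t, ‖u t‖, fun x hx => ?_⟩
  unfold lap
  rw [← integral_mul_const]
  refine norm_integral_le_of_norm_le
    (((hu.integrable_of_hasCompactSupport hcs).norm).mul_const _) (Filter.Eventually.of_forall fun t => ?_)
  by_cases ht : t ∈ Icc c b
  · rw [norm_mul, Complex.norm_exp, mul_comm]
    gcongr
    simp
    nlinarith [ht.1]
  · simp [h t ht]

lemma titch0 (f g : ℝ → ℂ) (hf : Continuous f) (hg : Continuous g) (b b' : ℝ)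
    (hfB : ∀ t, t ∉ Icc 0 b → f t = 0) (hgB : ∀ t, t ∉ Icc 0 b' → g t = 0) (c : ℝ) (hc : 0 < c)
    (h : ∀ x < c, lconv f g x = 0) (u v : ℝ) (huv : u + v < c) : f u * g v = 0 := by
  set fi : ℕ → ℝ → ℂ := fun i t => (t : ℂ) ^ i * f t with hfi
  set gi : ℕ → ℝ → ℂ := fun i t => (t : ℂ) ^ i * g t with hgi
  have cfi : ∀ i, Continuous (fi i) := fun i => by fun_prop
  have cgi : ∀ i, Continuous (gi i) := fun i => by fun_prop
  have sfi : ∀ i t, t ∉ Icc 0 b → fi i t = 0 := fun i t ht => by simp [hfi, hfB t ht]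
  have sgi : ∀ i t, t ∉ Icc 0 b' → gi i t = 0 := fun i t ht => by simp [hgi, hgB t ht]
  have kfi : ∀ i, HasCompactSupport (fi i) := fun i =>
    HasCompactSupport.intro isCompact_Icc (fun t ht => sfi i t ht)
  have kgi : ∀ i, HasCompactSupport (gi i) := fun i =>
    HasCompactSupport.intro isCompact_Icc (fun t ht => sgi i t ht)
  have kg : HasCompactSupport g := HasCompactSupport.intro isCompact_Icc (fun t ht => hgB t ht)
  have hH : ∀ n : ℕ, Dec (fun x => ∑ k ∈ Finset.range (n + 1),
      (n.choose k : ℂ) * (lap (fi k) x * lap (gi (n - k)) x)) c := by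
    intro n
    have e : (fun x => ∑ k ∈ Finset.range (n + 1),
      (n.choose k : ℂ) * (lap (fi k) x * lap (gi (n - k)) x)) =
        lap (fun t => (t : ℂ) ^ n * lconv f g t) := by
      ext x
      simp only [← lap_lconv (cfi _) (cgi _) (kfi _) (kgi _)]
      unfold lap
      simp only [← integral_const_mul]
      rw [← integral_finsetSum]
      · congr 1
        ext s
        have : (s : ℂ) ^ n * lconv f g s =
            ∑ k ∈ Finset.range (n + 1), (n.choose k : ℂ) * lconv (fi k) (gi (n - k)) s := by
          unfold lconv
          simp only [← integral_const_mul]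
          rw [← integral_finsetSum]
          · congr 1
            ext t
            rw [show (s : ℂ) = t + (s - t : ℝ) by push_cast; ring, add_pow, Finset.sum_mul]
            refine Finset.sum_congr rfl fun k _ => ?_
            simp only [hfi, hgi]
            push_cast
            ring
          · intro k _
            refine Integrable.const_mul ?_ _
            exact ((cfi k).mul ((cgi (n - k)).comp (continuous_const.sub continuous_id))).integrable_of_hasCompactSupport
              (kfi k).mul_right
        rw [this, Finset.mul_sum]
        refine Finset.sum_congr rfl fun k _ => ?_
        ring
      · intro k _
        have hcc : Continuous (lconv (fi k) (gi (n - k))) := lconv_continuous (cfi _) (cgi _) (kgi _)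
        have hs : HasCompactSupport (lconv (fi k) (gi (n - k))) :=
          HasCompactSupport.intro isCompact_Icc (fun t ht => lconv_supp (sfi k) (sgi (n - k)) t ht)
        refine Integrable.const_mul ?_ _
        exact (by fun_prop : Continuous fun t : ℝ =>
          Complex.exp (-(x : ℂ) * t) * lconv (fi k) (gi (n - k)) t).integrable_of_hasCompactSupport hs.mul_left
    rw [e]
    have hcc : Continuous (lconv f g) := lconv_continuous hf hg kg
    refine lap_dec (b := b + b') (by fun_prop) fun t ht => ?_
    by_cases h1 : t < c
    · rw [h t h1, mul_zero]
    · rw [lconv_supp hfB hgB t, mul_zero]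
      intro h2
      exact ht ⟨not_lt.1 h1, h2.2⟩
  have hD := dec_alg (fun i => lap (fi i)) (fun i => lap (gi i))
    (fun i => lap_dec (cfi i) (sfi i)) (fun i => lap_dec (cgi i) (sgi i)) c hc hH
  -- vanishing of all the twisted convolutions
  have hz : ∀ j, ∀ x < c, lconv (fi 0) (gi j) x = 0 := by
    intro j x hx
    obtain ⟨c', hc'1, hc'2⟩ := exists_between (max_lt hx hc)
    obtain ⟨C, hC⟩ := hD 0 j c' hc'2
    refine phragmen (lconv (fi 0) (gi j)) (lconv_continuous (cfi _) (cgi _) (kgi _)) (b + b')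
      (fun t ht => lconv_supp (sfi 0) (sgi j) t (by simpa using ht)) c'
      ((le_max_right _ _).trans_lt hc'1) C (fun y hy => ?_) x ((le_max_left _ _).trans_lt hc'1)
    have := hC y hy
    beta_reduce at this
    rw [← lap_lconv (cfi _) (cgi _) (kfi _) (kgi _)] at this
    exact this
  have hfin := moments (fun t => f (u + v - t) * g t) (by fun_prop) b'
    (fun t ht => by simp [hgB t ht]) (fun j => by
      have h1 := hz j (u + v) huv
      unfold lconv at h1
      rw [← integral_sub_left_eq_self _ volume (u + v)] at h1
      rw [← h1]
      congr 1
      ext t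
      simp only [hfi, hgi, sub_sub_cancel]
      ring) v
  simpa using hfin

/-- Titchmarsh theorem on the line, for continuous compactly supported functions. -/
lemma titch_line (f g : ℝ → ℂ) (hf : Continuous f) (hg : Continuous g) (a b a' b' : ℝ)
    (hfB : ∀ t, t ∉ Icc a b → f t = 0) (hgB : ∀ t, t ∉ Icc a' b' → g t = 0) (c : ℝ)
    (hc : a + a' < c)
    (h : ∀ x < c, lconv f g x = 0) (u v : ℝ) (huv : u + v < c) : f u * g v = 0 := by
  have := titch0 (fun t => f (t + a)) (fun t => g (t + a')) (by fun_prop) (by fun_prop)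
    (b - a) (b' - a') (fun t ht => hfB _ fun h => ht ⟨by linarith [h.1], by linarith [h.2]⟩)
    (fun t ht => hgB _ fun h => ht ⟨by linarith [h.1], by linarith [h.2]⟩) (c - a - a')
    (by linarith) (fun x hx => by
      have h1 := h (x + a + a') (by linarith)
      unfold lconv at h1 ⊢
      rw [← integral_add_right_eq_self _ a] at h1
      rw [← h1]
      congr 1
      ext t
      rw [show x + a + a' - (t + a) = x - t + a' by ring]) (u - a) (v - a') (by linarith)
  simpa using this

/-- The twisted sum `∑ α^k S_{2πk/n} f`. -/
def tw (n : ℕ) (α : ℂ) (f : 𝕋 → ℂ) : 𝕋 → ℂ := fun x =>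
  ∑ k : Fin n, α ^ (k : ℕ) * shift (proj (2 * π * k / n)) f x

lemma proj_add (a b : ℝ) : proj (a + b) = proj a + proj b := rfl

lemma proj_sub (a b : ℝ) : proj (a - b) = proj a - proj b := rfl

lemma proj_continuous : Continuous proj := AddCircle.continuous_mk' _

lemma proj_surj (x : 𝕋) : ∃ t, proj t = x := QuotientAddGroup.mk_surjective x

lemma proj_eq_iff (a b : ℝ) : proj a = proj b ↔ ∃ z : ℤ, a = b + z * (2 * π) := by
  have h1 : proj a = proj b ↔ proj (a - b) = 0 := by rw [proj_sub, sub_eq_zero]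
  rw [h1]
  unfold proj
  rw [AddCircle.coe_eq_zero_iff]
  constructor
  · rintro ⟨z, hz⟩
    exact ⟨z, by rw [zsmul_eq_mul] at hz; linarith⟩
  · rintro ⟨z, hz⟩
    exact ⟨z, by rw [zsmul_eq_mul]; linarith⟩

lemma mem_Rn_iff {n : ℕ} (hn : 0 < n) (a b t : ℝ) :
    proj t ∈ Rn n (proj '' Icc a b) ↔ ∃ m : ℤ, t - m * (2 * π / n) ∈ Icc a b := by
  have hn' : (n : ℝ) ≠ 0 := by positivity
  unfold Rn
  simp only [mem_iUnion, Set.mem_vadd_set, vadd_eq_add, Finset.mem_range]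
  constructor
  · rintro ⟨k, hk, _, ⟨s, hs, rfl⟩, h⟩
    rw [← proj_add, eq_comm, proj_eq_iff] at h
    obtain ⟨z, hz⟩ := h
    refine ⟨k + z * n, ?_⟩
    convert hs using 1
    rw [hz]
    push_cast
    field_simp
    ring
  · rintro ⟨m, hm⟩
    have h0 : 0 ≤ m % n := Int.emod_nonneg _ (by omega)
    have h1 : m % n < n := Int.emod_lt_of_pos _ (by omega)
    refine ⟨(m % n).toNat, by omega, _, ⟨_, hm, rfl⟩, ?_⟩
    rw [← proj_add, eq_comm, proj_eq_iff]
    refine ⟨m / n, ?_⟩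
    have h2 : ((m % n).toNat : ℝ) = ((m % n : ℤ) : ℝ) := by
      rw [← Int.cast_natCast, Int.toNat_of_nonneg h0]
    have h3 : (m : ℝ) = n * ((m / n : ℤ) : ℝ) + ((m % n : ℤ) : ℝ) := by
      exact_mod_cast (Int.mul_ediv_add_emod m n).symm
    rw [h2]
    rw [h3]
    field_simp
    ring

lemma tw_eq_range (n : ℕ) (α : ℂ) (f : 𝕋 → ℂ) (x : 𝕋) :
    tw n α f x = ∑ k ∈ Finset.range n, α ^ k * f (x - proj (2 * π * k / n)) :=
  Fin.sum_univ_eq_sum_range (fun k => α ^ k * f (x - proj (2 * π * k / n))) n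

lemma tw_continuous (n : ℕ) (α : ℂ) {f : 𝕋 → ℂ} (hf : Continuous f) : Continuous (tw n α f) := by
  unfold tw shift
  fun_prop

lemma tw_supp {n : ℕ} (hn : 0 < n) (α : ℂ) {f : 𝕋 → ℂ} {a b : ℝ}
    (h : ∀ x, x ∉ Rn n (proj '' Icc a b) → f x = 0) :
    ∀ x, x ∉ Rn n (proj '' Icc a b) → tw n α f x = 0 := by
  intro x hx
  obtain ⟨t, rfl⟩ := proj_surj x
  rw [tw_eq_range]
  refine Finset.sum_eq_zero fun k _ => ?_
  rw [← proj_sub, h, mul_zero]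
  intro h'
  apply hx
  rw [mem_Rn_iff hn] at h' ⊢
  obtain ⟨m, hm⟩ := h'
  refine ⟨m + k, ?_⟩
  convert hm using 1
  push_cast
  ring

lemma Rn_local {n : ℕ} (hn : 0 < n) {a b t : ℝ} (ht : t ∈ Ioo (b - 2 * π / n) (a + 2 * π / n))
    (h : proj t ∈ Rn n (proj '' Icc a b)) : t ∈ Icc a b := by
  rw [mem_Rn_iff hn] at h
  obtain ⟨m, hm⟩ := h
  have hd : 0 < 2 * π / n := by positivity
  have : m = 0 := by
    rcases lt_trichotomy m 0 with h | h | h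
    · exfalso
      have h1 : (m : ℝ) ≤ -1 := by exact_mod_cast (by omega : m ≤ -1)
      have := hm.2
      have := ht.1
      nlinarith
    · exact h
    · exfalso
      have h1 : (1 : ℝ) ≤ m := by exact_mod_cast (by omega : 1 ≤ m)
      have := hm.1
      have := ht.2
      nlinarith
  subst this
  simpa using hm

/-- Localisation of a function on the circle to `[a, b]`. -/
def loc (a b : ℝ) (φ : 𝕋 → ℂ) : ℝ → ℂ := indicator (Icc a b) (fun t => φ (proj t))

lemma loc_eq {n : ℕ} (hn : 0 < n) {φ : 𝕋 → ℂ} {a b : ℝ}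
    (h : ∀ x, x ∉ Rn n (proj '' Icc a b) → φ x = 0) {t : ℝ}
    (ht : t ∈ Ioo (b - 2 * π / n) (a + 2 * π / n)) : loc a b φ t = φ (proj t) := by
  unfold loc
  by_cases h' : t ∈ Icc a b
  · rw [indicator_of_mem h']
  · rw [indicator_of_notMem h', h]
    exact fun h2 => h' (Rn_local hn ht h2)

lemma loc_zero (a b : ℝ) (φ : 𝕋 → ℂ) (t : ℝ) (ht : t ∉ Icc a b) : loc a b φ t = 0 :=
  indicator_of_notMem ht _

lemma loc_continuous {n : ℕ} (hn : 0 < n) {φ : 𝕋 → ℂ} (hφ : Continuous φ) {a b : ℝ}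
    (hab : b - a < 2 * π / n)
    (h : ∀ x, x ∉ Rn n (proj '' Icc a b) → φ x = 0) : Continuous (loc a b φ) := by
  rw [continuous_iff_continuousAt]
  intro t
  by_cases ht : t ∈ Icc a b
  · have : loc a b φ =ᶠ[𝓝 t] fun t => φ (proj t) := by
      filter_upwards [Ioo_mem_nhds (show b - 2 * π / n < t by linarith [ht.1])
        (show t < a + 2 * π / n by linarith [ht.2])] with s hs
      exact loc_eq hn h hs
    exact ((hφ.comp proj_continuous).continuousAt).congr this.symm
  · have : loc a b φ =ᶠ[𝓝 t] fun _ => 0 := by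
      filter_upwards [isClosed_Icc.isOpen_compl.mem_nhds ht] with s hs
      exact loc_zero a b φ s hs
    exact continuousAt_const.congr this.symm

lemma tw_period {n : ℕ} (hn : 0 < n) {α : ℂ} (hα : α ^ n = 1) (f : 𝕋 → ℂ) (t : ℝ) :
    tw n α f (proj (t + 2 * π / n)) = α * tw n α f (proj t) := by
  have hn' : (n : ℝ) ≠ 0 := by positivity
  simp only [tw_eq_range, ← proj_sub]
  set φ : ℕ → ℂ := fun k => α ^ k * f (proj (t + 2 * π / n - 2 * π * k / n)) with hφ
  have h1 : α * ∑ k ∈ Finset.range n, α ^ k * f (proj (t - 2 * π * k / n)) =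
      ∑ k ∈ Finset.range n, φ (k + 1) := by
    rw [Finset.mul_sum]
    refine Finset.sum_congr rfl fun k _ => ?_
    simp only [hφ]
    rw [pow_succ, show t + 2 * π / n - 2 * π * ((k + 1 : ℕ) : ℝ) / n = t - 2 * π * k / n by
      push_cast; ring]
    ring
  have h2 : φ n = φ 0 := by
    simp only [hφ, hα, pow_zero]
    congr 2
    rw [proj_eq_iff]
    refine ⟨-1, ?_⟩
    push_cast
    field_simp
    ring
  rw [h1]
  have h3 := Finset.sum_range_succ φ n
  rw [Finset.sum_range_succ', h2] at h3
  exact (add_right_cancel h3).symm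

lemma tw_period' {n : ℕ} (hn : 0 < n) {α : ℂ} (hα : α ^ n = 1) (f : 𝕋 → ℂ) (t : ℝ) (k : ℕ) :
    tw n α f (proj (t + k * (2 * π / n))) = α ^ k * tw n α f (proj t) := by
  induction k with
  | zero => simp
  | succ k ih =>
    rw [show t + (k + 1 : ℕ) * (2 * π / n) = t + k * (2 * π / n) + 2 * π / n by push_cast; ring,
      tw_period hn hα, ih]
    ring

lemma circ_integrable {φ : 𝕋 → ℂ} (h : Continuous φ) : Integrable φ :=
  h.integrable_of_hasCompactSupport (HasCompactSupport.of_compactSpace φ)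

lemma conv_tw (n : ℕ) (α : ℂ) {f g : 𝕋 → ℂ} (hf : Continuous f) (hg : Continuous g) (x : 𝕋) :
    circConv (tw n α f) g x = tw n α (circConv f g) x := by
  simp only [circConv, tw_eq_range, Finset.sum_mul]
  rw [integral_finsetSum]
  · refine Finset.sum_congr rfl fun k _ => ?_
    rw [← integral_sub_right_eq_self
      (fun s => f s * g (x - proj (2 * π * k / n) - s)) (proj (2 * π * k / n)),
      ← integral_const_mul]
    congr 1
    ext t
    rw [mul_assoc, sub_sub_sub_cancel_right]
  · intro k _
    exact circ_integrable (by fun_prop)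

lemma conv_int {n : ℕ} (hn : 0 < n) {α : ℂ} (hα : α ^ n = 1) {f g : 𝕋 → ℂ} (hf : Continuous f)
    (hg : Continuous g) (x b : ℝ) :
    circConv (tw n α f) g (proj x) =
      ∫ t in (b - 2 * π / n)..b, tw n α f (proj t) * tw n α g (proj (x - t)) := by
  have hn' : (n : ℝ) ≠ 0 := by positivity
  have hp := proj_continuous
  have hF := tw_continuous n α hf
  set d := 2 * π / n with hd
  set ψ : ℝ → ℂ := fun t => tw n α f (proj t) * g (proj (x - t)) with hψ
  have hψc : Continuous ψ := by
    have h1 : Continuous fun t : ℝ => proj (x - t) := hp.comp (by fun_prop)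
    exact (hF.comp hp).mul (hg.comp h1)
  have e1 : circConv (tw n α f) g (proj x) = ∫ t in (b - d)..(b - d + 2 * π), ψ t :=
    (AddCircle.intervalIntegral_preimage (2 * π) (b - d)
      (fun t : 𝕋 => tw n α f t * g (proj x - t))).symm
  have e2 := intervalIntegral.sum_integral_adjacent_intervals (f := ψ) (μ := volume)
    (a := fun k : ℕ => b - d + k * d) (n := n) (fun k _ => hψc.intervalIntegrable _ _)
  have e3 : b - d + (n : ℕ) * d = b - d + 2 * π := by rw [hd]; field_simp
  simp only [Nat.cast_zero, zero_mul, add_zero, e3] at e2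
  rw [e1, ← e2]
  have e4 : ∀ k : ℕ, ∫ t in (b - d + k * d)..(b - d + (k + 1 : ℕ) * d), ψ t =
      ∫ t in (b - d)..b, tw n α f (proj t) * (α ^ k * g (proj (x - t) - proj (2 * π * k / n))) := by
    intro k
    have := intervalIntegral.integral_comp_add_right (a := b - d) (b := b) ψ (k * d)
    rw [show b - d + (k + 1 : ℕ) * d = b + k * d by push_cast; ring, ← this]
    congr 1
    ext t
    simp only [hψ]
    rw [hd, tw_period' hn hα, ← proj_sub,
      show x - (t + k * (2 * π / n)) = x - t - 2 * π * k / n by ring]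
    ring
  simp only [e4]
  rw [← intervalIntegral.integral_finsetSum]
  · congr 1
    ext t
    rw [tw_eq_range n α g, Finset.mul_sum]
  · intro k _
    have h1 : Continuous fun t : ℝ => proj (x - t) := hp.comp (by fun_prop)
    have h2 : Continuous fun t : ℝ => g (proj (x - t) - proj (2 * π * k / n)) :=
      hg.comp (h1.sub continuous_const)
    exact ((hF.comp hp).mul (continuous_const.mul h2)).intervalIntegrable _ _

lemma key_zero {n : ℕ} (hn : 0 < n) {α : ℂ} (hα : α ^ n = 1)
    {f g : 𝕋 → ℂ} (hf : Continuous f) (hg : Continuous g)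
    {aI bI aJ bJ : ℝ} (hI : aI ≤ bI) (hJ : aJ ≤ bJ)
    (hlen : (bI - aI) + (bJ - aJ) < 2 * π / n)
    (hsf : ∀ x, x ∉ Rn n (proj '' Icc aI bI) → f x = 0)
    (hsg : ∀ x, x ∉ Rn n (proj '' Icc aJ bJ) → g x = 0)
    {aK bK : ℝ} (hK : aI + aJ < aK) (hKab : aK ≤ bK) (hbK : bK ≤ bI + bJ)
    (hsfg : ∀ x, x ∉ Rn n (proj '' Icc aK bK) → circConv f g x = 0) {u v : ℝ}
    (hu : u ∈ Ioo (bI - 2 * π / n) (aI + 2 * π / n))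
    (hv : v ∈ Ioo (bJ - 2 * π / n) (aJ + 2 * π / n)) (huv : u + v < aK) :
    tw n α f (proj u) * tw n α g (proj v) = 0 := by
  have hd : 0 < 2 * π / n := by positivity
  have hF := tw_supp hn α hsf
  have hG := tw_supp hn α hsg
  have hFG := tw_supp hn α hsfg
  rw [← loc_eq hn hF hu, ← loc_eq hn hG hv]
  refine titch_line _ _ (loc_continuous hn (tw_continuous n α hf) (by linarith) hF)
    (loc_continuous hn (tw_continuous n α hg) (by linarith) hG) aI bI aJ bJ
    (loc_zero _ _ _) (loc_zero _ _ _) aK hK (fun x hx => ?_) u v huv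
  by_cases hx1 : x ≤ bI + bJ - 2 * π / n
  · refine lconv_supp (loc_zero _ _ _) (loc_zero _ _ _) x fun h => ?_
    linarith [h.1]
  push Not at hx1
  have h1 : circConv (tw n α f) g (proj x) = 0 := by
    rw [conv_tw n α hf hg, hFG]
    intro h
    have := Rn_local hn (⟨by linarith, by linarith⟩ : x ∈ Ioo (bK - 2 * π / n) (aK + 2 * π / n)) h
    linarith [this.1]
  rw [conv_int hn hα hf hg x bI, intervalIntegral.integral_of_le (by linarith),
    ← integral_indicator measurableSet_Ioc] at h1
  rw [← h1]
  unfold lconv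
  congr 1
  ext t
  by_cases ht : t ∈ Ioc (bI - 2 * π / n) bI
  · rw [indicator_of_mem ht, ← loc_eq hn hF ⟨ht.1, by linarith [ht.2]⟩]
    by_cases ht' : t ∈ Icc aI bI
    · rw [← loc_eq hn hG ⟨by linarith [ht'.2], by linarith [ht'.1]⟩]
    · rw [loc_zero _ _ _ t ht', zero_mul, zero_mul]
  · rw [indicator_of_notMem ht, loc_zero, zero_mul]
    intro h
    exact ht ⟨by linarith [h.1], h.2⟩

lemma exists_root {n : ℕ} (hn : 0 < n) {g : 𝕋 → ℂ} {a b : ℝ}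
    (hsg : tsupport g ⊆ Rn n (proj '' Icc a b))
    (hmin : ∀ a' > a, ¬ tsupport g ⊆ Rn n (proj '' Icc a' b)) :
    ∃ α : ℂ, α ^ n = 1 ∧ proj a ∈ tsupport (tw n α g) := by
  have hprim := Complex.isPrimitiveRoot_exp n hn.ne'
  set ζ := Complex.exp (2 * π * Complex.I / n)
  by_contra! hcon
  have hroot : ∀ j : Fin n, (ζ ^ (j : ℕ)) ^ n = 1 := fun j => by
    rw [← pow_mul, mul_comm, pow_mul, hprim.pow_eq_one, one_pow]
  have hopen : IsOpen (⋂ j : Fin n, (tsupport (tw n (ζ ^ (j : ℕ)) g))ᶜ) :=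
    isOpen_iInter_of_finite fun j => (isClosed_tsupport _).isOpen_compl
  have hmem : proj a ∈ (⋂ j : Fin n, (tsupport (tw n (ζ ^ (j : ℕ)) g))ᶜ) :=
    mem_iInter.2 fun j => hcon _ (hroot j)
  have hnhds := (hopen.preimage proj_continuous).mem_nhds hmem
  obtain ⟨ε, hε, hball⟩ := Metric.mem_nhds_iff.1 hnhds
  have hzero : ∀ t ∈ Ioo (a - ε) (a + ε), ∀ k < n, g (proj (t - 2 * π * k / n)) = 0 := by
    intro t ht k hk
    have h1 := hball (by rw [Real.ball_eq_Ioo]; exact ht : t ∈ Metric.ball a ε)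
    rw [mem_preimage, mem_iInter] at h1
    set p : Polynomial ℂ := ∑ k ∈ Finset.range n,
      Polynomial.C (g (proj t - proj (2 * π * k / n))) * Polynomial.X ^ k with hp
    have hdeg : p.degree < n := by
      rw [hp]
      refine (Polynomial.degree_sum_le _ _).trans_lt
        ((Finset.sup_lt_iff (WithBot.bot_lt_coe n)).2 ?_)
      intro k hk
      exact (Polynomial.degree_C_mul_X_pow_le _ _).trans_lt (Nat.cast_lt.2 (Finset.mem_range.1 hk))
    have hp0 : p = 0 := by
      refine Polynomial.eq_zero_of_degree_lt_of_eval_index_eq_zero (s := Finset.univ)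
        (v := fun j : Fin n => ζ ^ (j : ℕ)) ?_ (by simpa using hdeg) ?_
      · intro i _ j _ hij
        exact Fin.ext (hprim.pow_inj i.2 j.2 hij)
      · intro j _
        have h2 := image_eq_zero_of_notMem_tsupport (h1 j)
        rw [tw_eq_range] at h2
        rw [hp, Polynomial.eval_finsetSum, ← h2]
        refine Finset.sum_congr rfl fun k _ => ?_
        rw [Polynomial.eval_C_mul, Polynomial.eval_pow, Polynomial.eval_X, mul_comm]
    have h3 : p.coeff k = g (proj t - proj (2 * π * k / n)) := by
      rw [hp]
      simp [Polynomial.coeff_X_pow, hk]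
    rw [proj_sub, ← h3, hp0, Polynomial.coeff_zero]
  refine hmin (a + ε) (by linarith) ?_
  intro x hx
  have hx1 := hsg hx
  obtain ⟨t, rfl⟩ := proj_surj x
  rw [mem_Rn_iff hn] at hx1 ⊢
  obtain ⟨m, hm⟩ := hx1
  refine ⟨m, ?_, hm.2⟩
  by_contra! hlt
  -- the whole neighbourhood of `t` is in the zero set
  have hn' : (n : ℝ) ≠ 0 := by positivity
  have hVz : ∀ s ∈ Ioo (a - ε) (a + ε), g (proj (s + m * (2 * π / n))) = 0 := by
    intro s hs
    have h0 : 0 ≤ (-m) % n := Int.emod_nonneg _ (by omega)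
    have h1 : (-m) % n < n := Int.emod_lt_of_pos _ (by omega)
    have := hzero s hs ((-m) % n).toNat (by omega)
    rw [← this]
    congr 1
    rw [proj_eq_iff]
    refine ⟨-((-m) / n), ?_⟩
    have h2 : (((-m) % n).toNat : ℝ) = (((-m) % n : ℤ) : ℝ) := by
      rw [← Int.cast_natCast, Int.toNat_of_nonneg h0]
    have h3 : (m : ℝ) = -(n * (((-m) / n : ℤ) : ℝ) + (((-m) % n : ℤ) : ℝ)) := by
      have := Int.mul_ediv_add_emod (-m) n
      have h4 : m = -(n * ((-m) / n) + (-m) % n) := by omega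
      exact_mod_cast h4
    rw [h2, Int.cast_neg]
    conv_lhs => rw [h3]
    field_simp
    ring
  have hev : ∀ᶠ y in 𝓝 (proj t), g y = 0 := by
    have hopenmap : IsOpenMap proj := QuotientAddGroup.isOpenMap_coe
    have hI : Ioo (a - ε + m * (2 * π / n)) (a + ε + m * (2 * π / n)) ∈ 𝓝 t :=
      Ioo_mem_nhds (by linarith [hm.1]) (by linarith)
    filter_upwards [hopenmap.image_mem_nhds hI]
    rintro _ ⟨s, hs, rfl⟩
    have := hVz (s - m * (2 * π / n)) ⟨by linarith [hs.1], by linarith [hs.2]⟩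
    simpa using this
  exact notMem_tsupport_iff_eventuallyEq.2 hev hx

/-- Near a support point there are nonvanishing points. -/
lemma exists_near {φ : 𝕋 → ℂ} {a : ℝ} (h : proj a ∈ tsupport φ) {p q : ℝ} (hp : p < a)
    (hq : a < q) : ∃ v ∈ Ioo p q, φ (proj v) ≠ 0 := by
  have hopenmap : IsOpenMap proj := QuotientAddGroup.isOpenMap_coe
  obtain ⟨_, ⟨v, hv, rfl⟩, h2⟩ := mem_closure_iff_nhds.1 h _
    (hopenmap.image_mem_nhds (Ioo_mem_nhds hp hq))
  exact ⟨v, hv, h2⟩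

/-- Titchmarsh theorem for distributions on a circle (continuous-function version). -/
theorem titchmarsh_circle (n : ℕ) (hn : 2 ≤ n)
    (f g : 𝕋 → ℂ) (hf : Continuous f) (hg : Continuous g)
    (aI bI aJ bJ : ℝ) (hI : aI ≤ bI) (hJ : aJ ≤ bJ)
    (hlen : (bI - aI) + (bJ - aJ) < 2 * π / n)
    (hsf : tsupport f ⊆ Rn n (proj '' Icc aI bI))
    (hminf : ∀ a' b' : ℝ, aI ≤ a' → b' ≤ bI → (a', b') ≠ (aI, bI) →
      ¬ tsupport f ⊆ Rn n (proj '' Icc a' b'))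
    (hsg : tsupport g ⊆ Rn n (proj '' Icc aJ bJ))
    (hming : ∀ a' b' : ℝ, aJ ≤ a' → b' ≤ bJ → (a', b') ≠ (aJ, bJ) →
      ¬ tsupport g ⊆ Rn n (proj '' Icc a' b'))
    (aK bK : ℝ) (haK : aI + aJ ≤ aK) (hKab : aK ≤ bK) (hbK : bK ≤ bI + bJ)
    (hsfg : tsupport (circConv f g) ⊆ Rn n (proj '' Icc aK bK))
    (hlam : 0 < aK - aI - aJ) :
    ∃ α β : ℂ, α ^ n = 1 ∧ β ^ n = 1 ∧ α ≠ β ∧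
      (∀ x ∈ proj '' Ioo (bI - 2 * π / n) (aI + (aK - aI - aJ)),
        ∑ k : Fin n, α ^ (k : ℕ) * shift (proj (2 * π * k / n)) f x = 0) ∧
      ((∀ x ∈ proj '' Ioo (bJ - 2 * π / n) aJ,
        ∑ k : Fin n, α ^ (k : ℕ) * shift (proj (2 * π * k / n)) g x = 0) ∧
        proj aJ ∈ tsupport (fun x =>
          ∑ k : Fin n, α ^ (k : ℕ) * shift (proj (2 * π * k / n)) g x)) ∧
      ((∀ x ∈ proj '' Ioo (bI - 2 * π / n) aI,
        ∑ k : Fin n, β ^ (k : ℕ) * shift (proj (2 * π * k / n)) f x = 0) ∧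
        proj aI ∈ tsupport (fun x =>
          ∑ k : Fin n, β ^ (k : ℕ) * shift (proj (2 * π * k / n)) f x)) ∧
      (∀ x ∈ proj '' Ioo (bJ - 2 * π / n) (aJ + (aK - aI - aJ)),
        ∑ k : Fin n, β ^ (k : ℕ) * shift (proj (2 * π * k / n)) g x = 0) := by
  have hn0 : 0 < n := by omega
  have hd : 0 < 2 * π / n := by positivity
  have of_supp : ∀ {φ : 𝕋 → ℂ} {S : Set 𝕋}, tsupport φ ⊆ S → ∀ x, x ∉ S → φ x = 0 :=
    fun h x hx => image_eq_zero_of_notMem_tsupport fun h' => hx (h h')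
  have hf0 := of_supp hsf
  have hg0 := of_supp hsg
  have hfg0 := of_supp hsfg
  obtain ⟨α, hα, hαs⟩ := exists_root hn0 hsg
    (fun a' ha' => hming a' bJ ha'.le le_rfl (by simp [ha'.ne']))
  obtain ⟨β, hβ, hβs⟩ := exists_root hn0 hsf
    (fun a' ha' => hminf a' bI ha'.le le_rfl (by simp [ha'.ne']))
  have hK : aI + aJ < aK := by linarith
  have h1 : ∀ x ∈ proj '' Ioo (bI - 2 * π / n) (aI + (aK - aI - aJ)), tw n α f x = 0 := by
    rintro _ ⟨x, hx, rfl⟩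
    obtain ⟨v, hv, hv0⟩ := exists_near hαs (p := bJ - 2 * π / n)
      (q := min (aK - x) (aJ + 2 * π / n)) (by linarith)
      (lt_min (by linarith [hx.2]) (by linarith))
    have hvq := lt_min_iff.1 hv.2
    exact (mul_eq_zero.1 (key_zero hn0 hα hf hg hI hJ hlen hf0 hg0 hK hKab hbK hfg0
      (u := x) (v := v) ⟨hx.1, by linarith [hx.2]⟩ ⟨hv.1, hvq.2⟩
      (by linarith [hvq.1]))).resolve_right hv0
  have h2 : ∀ x ∈ proj '' Ioo (bJ - 2 * π / n) (aJ + (aK - aI - aJ)), tw n β g x = 0 := by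
    rintro _ ⟨x, hx, rfl⟩
    obtain ⟨v, hv, hv0⟩ := exists_near hβs (p := bI - 2 * π / n)
      (q := min (aK - x) (aI + 2 * π / n)) (by linarith)
      (lt_min (by linarith [hx.2]) (by linarith))
    have hvq := lt_min_iff.1 hv.2
    exact (mul_eq_zero.1 (key_zero hn0 hβ hf hg hI hJ hlen hf0 hg0 hK hKab hbK hfg0
      (u := v) (v := x) ⟨hv.1, hvq.2⟩ ⟨hx.1, by linarith [hx.2]⟩
      (by linarith [hvq.1]))).resolve_left hv0
  have hout : ∀ {φ : 𝕋 → ℂ} {a b : ℝ} (γ : ℂ), (∀ x, x ∉ Rn n (proj '' Icc a b) → φ x = 0) →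
      ∀ x ∈ proj '' Ioo (b - 2 * π / n) a, tw n γ φ x = 0 := by
    rintro φ a b γ h _ ⟨x, hx, rfl⟩
    refine tw_supp hn0 γ h _ fun h' => ?_
    have := Rn_local hn0 ⟨hx.1, by linarith [hx.2]⟩ h'
    linarith [this.1, hx.2]
  refine ⟨α, β, hα, hβ, ?_, h1, ⟨hout α hg0, hαs⟩, ⟨hout β hf0, hβs⟩, h2⟩
  rintro rfl
  obtain ⟨v, hv, hv0⟩ := exists_near hβs (p := bI - 2 * π / n) (q := aI + (aK - aI - aJ))
    (by linarith) (by linarith)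
  exact hv0 (h1 _ ⟨v, hv, rfl⟩)

end
end

section
/- (Case n = 2, forward direction.) Let f, g : 𝕋 → ℂ be continuous functions on 𝕋 = AddCircle (2π). Let a_I ≤ b_I and a_J ≤ b_J be real numbers with (b_I − a_I) + (b_J − a_J) < π, and set I = π_*([a_I, b_I]), J = π_*([a_J, b_J]). Assume supp f ⊆ R_2(I) with no strictly smaller closed subinterval I' = π_*([a', b']) (a_I ≤ a', b' ≤ b_I, (a', b') ≠ (a_I, b_I)) satisfying supp f ⊆ R_2(I'), and analogously for g with J. Let a_K, b_K be reals with a_I + a_J ≤ a_K ≤ b_K ≤ b_I + b_J and supp (f ⋆ g) ⊆ R_2(π_*([a_K, b_K])), and set λ = a_K − a_I − a_J. If λ > 0, then there exists α ∈ {1, −1} such that f + α S_π f vanishes on π_*((b_I − π, a_I + λ)) and g − α S_π g vanishes on π_*((b_J − π, a_J + λ)), where S_π denotes the shift by the image of the real number π in 𝕋. -/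
open MeasureTheory Real Set Pointwise

noncomputable section

/-- `R_2 A = A ∪ (π_*(π) + A)`. -/
def R2 (A : Set 𝕋) : Set 𝕋 := A ∪ (proj π +ᵥ A)


namespace TCirc

open Filter Topology Complex FourierTransform

/-- Continuous with compact support. -/
structure CC (f : ℝ → ℂ) : Prop where
  cont : Continuous f
  supp : HasCompactSupport f

/-- Convolution on the line. -/
def cv (f g : ℝ → ℂ) : ℝ → ℂ := fun x => ∫ t, f t * g (x - t)

/-- Two-sided Laplace transform. -/
def Lap (f : ℝ → ℂ) (z : ℂ) : ℂ := ∫ x : ℝ, f x * cexp (z * x)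

/-- Vanishing to the left of `s`. -/
def V (f : ℝ → ℂ) (s : ℝ) : Prop := ∀ x < s, f x = 0

lemma cv_eq (f g : ℝ → ℂ) :
    cv f g = MeasureTheory.convolution f g (ContinuousLinearMap.mul ℂ ℂ) volume := by
  ext x; simp [cv, MeasureTheory.convolution]

lemma CC.integrable {f : ℝ → ℂ} (hf : CC f) : Integrable f :=
  hf.cont.integrable_of_hasCompactSupport hf.supp

lemma CC.mul {f : ℝ → ℂ} (hf : CC f) {p : ℝ → ℂ} (hp : Continuous p) :
    CC (fun x => p x * f x) :=
  ⟨hp.mul hf.cont, hf.supp.mul_left⟩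

lemma CC.mul' {f : ℝ → ℂ} (hf : CC f) {p : ℝ → ℂ} (hp : Continuous p) :
    CC (fun x => f x * p x) :=
  ⟨hf.cont.mul hp, hf.supp.mul_right⟩

lemma CC.cv {f g : ℝ → ℂ} (hf : CC f) (hg : CC g) : CC (cv f g) := by
  rw [cv_eq]
  exact ⟨hg.supp.continuous_convolution_right _ hf.cont.locallyIntegrable hg.cont,
    hf.supp.convolution _ hg.supp⟩

lemma CC.zero : CC (fun _ => 0) := ⟨continuous_const, HasCompactSupport.zero⟩

lemma CC.sub {f g : ℝ → ℂ} (hf : CC f) (hg : CC g) : CC (fun x => f x - g x) :=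
  ⟨hf.cont.sub hg.cont, hf.supp.sub hg.supp⟩

lemma CC.add {f g : ℝ → ℂ} (hf : CC f) (hg : CC g) : CC (fun x => f x + g x) :=
  ⟨hf.cont.add hg.cont, hf.supp.add hg.supp⟩

lemma CC.sum {ι : Type*} (s : Finset ι) {f : ι → ℝ → ℂ} (hf : ∀ i, CC (f i)) :
    CC (fun x => ∑ i ∈ s, f i x) := by
  classical
  induction s using Finset.induction_on with
  | empty => simpa using CC.zero
  | insert a s ha ih => simpa [Finset.sum_insert ha] using (hf a).add ih

lemma CC.intLap {f : ℝ → ℂ} (hf : CC f) (z : ℂ) :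
    Integrable (fun x : ℝ => f x * cexp (z * x)) :=
  (hf.mul' (p := fun x : ℝ => cexp (z * x)) (by fun_prop)).integrable

lemma Lap_cv {f g : ℝ → ℂ} (hf : CC f) (hg : CC g) (z : ℂ) :
    Lap (cv f g) z = Lap f z * Lap g z := by
  have h := integral_convolution (ContinuousLinearMap.mul ℂ ℂ) (hf.intLap z) (hg.intLap z)
  simp only [ContinuousLinearMap.mul_apply'] at h
  rw [Lap, Lap, Lap, ← h]
  congr 1
  ext x
  simp only [cv, MeasureTheory.convolution, ContinuousLinearMap.mul_apply']
  rw [← integral_mul_const]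
  congr 1
  ext t
  have : cexp (z * x) = cexp (z * t) * cexp (z * ((x - t : ℝ) : ℂ)) := by
    rw [← Complex.exp_add]; congr 1; push_cast; ring
  rw [this]; ring

lemma fourier_eq_Lap (f : ℝ → ℂ) (ξ : ℝ) : 𝓕 f ξ = Lap f (((-2 * π * ξ : ℝ) : ℂ) * I) := by
  rw [Real.fourier_real_eq_integral_exp_smul, Lap]
  congr 1
  ext x
  rw [smul_eq_mul, mul_comm]
  congr 2
  push_cast; ring

lemma eq_zero_of_Lap {f : ℝ → ℂ} (hf : Integrable f)
    (h : ∀ y : ℝ, Lap f (y * I) = 0) {v : ℝ} (hv : ContinuousAt f v) : f v = 0 := by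
  have h0 : 𝓕 f = 0 := by
    ext ξ
    rw [fourier_eq_Lap]; exact h _
  have := hf.fourierInv_fourier_eq (by rw [h0]; exact integrable_zero _ _ _) hv
  rw [h0] at this
  rw [← this]
  simp [Real.fourierInv_eq]

lemma eq_of_Lap {f g : ℝ → ℂ} (hf : CC f) (hg : CC g) (h : ∀ z, Lap f z = Lap g z) (x : ℝ) :
    f x = g x := by
  have := eq_zero_of_Lap (f := fun x => f x - g x) (hf.sub hg).integrable (fun y => by
    have : Lap (fun x => f x - g x) (y * I) = Lap f (y * I) - Lap g (y * I) := by
      simp only [Lap, sub_mul]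
      exact integral_sub (hf.intLap _) (hg.intLap _)
    rw [this, h, sub_self]) (v := x) (hf.sub hg).cont.continuousAt
  exact sub_eq_zero.mp this

lemma V_cv {f g : ℝ → ℂ} {s t : ℝ} (hf : V f s) (hg : V g t) : V (cv f g) (s + t) := by
  intro x hx
  rw [cv, ← integral_zero ℝ ℂ]
  congr 1
  ext y
  by_cases h : y < s
  · rw [hf y h, zero_mul]
  · rw [hg (x - y) (by linarith), mul_zero]

lemma Lap_bound {f : ℝ → ℂ} (hf : Integrable f) (T : ℝ) (z : ℂ)
    (h : ∀ x, f x ≠ 0 → z.re * (T - x) ≤ 0) :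
    ‖cexp (z * T) * Lap f (-z)‖ ≤ ∫ x, ‖f x‖ := by
  rw [Lap, ← integral_const_mul]
  refine norm_integral_le_of_norm_le hf.norm (Eventually.of_forall fun x => ?_)
  by_cases hx : f x = 0
  · simp [hx]
  rw [norm_mul, norm_mul, Complex.norm_exp, Complex.norm_exp]
  have h1 : Real.exp (z * T).re * Real.exp (-z * x).re ≤ 1 := by
    rw [← Real.exp_add, Real.exp_le_one_iff]
    have := h x hx
    simp; linarith
  calc _ = (Real.exp (z * T).re * Real.exp (-z * x).re) * ‖f x‖ := by ring
    _ ≤ 1 * ‖f x‖ := by gcongr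
    _ = _ := one_mul _

lemma Lap_diff {f : ℝ → ℂ} (hf : Integrable f) (R : ℝ) (hR : ∀ x, f x ≠ 0 → |x| ≤ R) :
    Differentiable ℂ (Lap f) := by
  intro z₀
  have key := hasDerivAt_integral_of_dominated_loc_of_deriv_le (μ := (volume : Measure ℝ))
    (F := fun z x => f x * cexp (z * x)) (F' := fun z x => f x * (cexp (z * x) * x))
    (x₀ := z₀) (s := Metric.ball z₀ 1) (bound := fun x => ‖f x‖ * (Real.exp ((‖z₀‖ + 1) * R) * R))
    (Metric.ball_mem_nhds _ one_pos) ?_ ?_ ?_ ?_ ?_ ?_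
  · exact key.2.differentiableAt
  · refine Eventually.of_forall fun z => hf.aestronglyMeasurable.mul ?_
    exact (by fun_prop : Continuous fun x : ℝ => cexp (z * x)).aestronglyMeasurable
  · refine (hf.norm.mul_const (Real.exp (‖z₀‖ * R))).mono' (hf.aestronglyMeasurable.mul
      (by fun_prop : Continuous fun x : ℝ => cexp (z₀ * x)).aestronglyMeasurable)
      (Eventually.of_forall fun x => ?_)
    by_cases hx : f x = 0
    · simp [hx]
    rw [norm_mul, Complex.norm_exp]
    gcongr
    calc (z₀ * x).re ≤ ‖z₀ * x‖ := Complex.re_le_norm _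
      _ = ‖z₀‖ * |x| := by simp
      _ ≤ _ := by gcongr; exact hR x hx
  · exact hf.aestronglyMeasurable.mul
      (by fun_prop : Continuous fun x : ℝ => cexp (z₀ * x) * x).aestronglyMeasurable
  · refine Eventually.of_forall fun x z hz => ?_
    by_cases hx : f x = 0
    · simp [hx]
    rw [norm_mul, norm_mul, Complex.norm_exp]
    have hz' : ‖z‖ ≤ ‖z₀‖ + 1 := by
      have : ‖z - z₀‖ < 1 := by simpa [dist_eq_norm] using hz
      have := norm_le_norm_add_norm_sub' z z₀
      linarith
    gcongr
    · calc (z * x).re ≤ ‖z * x‖ := Complex.re_le_norm _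
        _ = ‖z‖ * |x| := by simp
        _ ≤ _ := by gcongr; exact hR x hx
    · simpa using hR x hx
  · exact hf.norm.mul_const _
  · refine Eventually.of_forall fun x z hz => ?_
    have h1 : HasDerivAt (fun z : ℂ => z * (x : ℂ)) x z := by
      simpa using (hasDerivAt_id z).mul_const (x : ℂ)
    exact (h1.cexp).const_mul (f x)

lemma CC.bdd {f : ℝ → ℂ} (hf : CC f) : ∃ R, ∀ x, f x ≠ 0 → |x| ≤ R := by
  obtain ⟨R, hR⟩ := hf.supp.isCompact.isBounded.exists_norm_le
  exact ⟨R, fun x hx => hR x (subset_tsupport _ hx)⟩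

/-- Titchmarsh for squares. -/
lemma V_square {h : ℝ → ℂ} (hh : CC h) (T : ℝ) (hT : V (cv h h) (2 * T)) : V h T := by
  set φ : ℝ → ℂ := (Iio T).indicator h with hφ
  have hφi : Integrable φ := hh.integrable.indicator measurableSet_Iio
  have hψi : Integrable (fun x => h x - φ x) := hh.integrable.sub hφi
  obtain ⟨R, hR⟩ := hh.bdd
  have hφd : Differentiable ℂ (Lap φ) := Lap_diff hφi R fun x hx => hR x (by
    intro h0; apply hx; simp [hφ, indicator, h0])
  set E : ℂ → ℂ := fun z => cexp (z * T) * Lap φ (-z) with hE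
  have hEd : Differentiable ℂ E := by
    have : Differentiable ℂ fun z : ℂ => Lap φ (-z) := hφd.comp differentiable_neg
    exact (by fun_prop : Differentiable ℂ fun z : ℂ => cexp (z * T)).mul this
  have hLsub : ∀ z, Lap φ z = Lap h z - Lap (fun x => h x - φ x) z := by
    intro z
    have hi : Integrable fun x : ℝ => φ x * cexp (z * x) := by
      have := (hh.intLap z).indicator (measurableSet_Iio (a := T))
      refine this.congr (Eventually.of_forall fun x => ?_)
      simp only [hφ, indicator]; split_ifs <;> simp
    simp only [Lap, sub_mul]
    rw [integral_sub (hh.intLap z) hi]; ring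
  have hbound : ∀ z, ‖E z‖ ≤ (∫ x, ‖φ x‖) + ((1 + ∫ x, ‖cv h h x‖) + ∫ x, ‖h x - φ x‖) := by
    intro z
    have n1 : 0 ≤ ∫ x, ‖φ x‖ := integral_nonneg fun _ => norm_nonneg _
    have n2 : 0 ≤ ∫ x, ‖cv h h x‖ := integral_nonneg fun _ => norm_nonneg _
    have n3 : 0 ≤ ∫ x, ‖h x - φ x‖ := integral_nonneg fun _ => norm_nonneg _
    rcases le_total z.re 0 with hz | hz
    · have := Lap_bound hφi T z (fun x hx => by
        have : x < T := by
          by_contra hc; apply hx; simp [hφ, hc]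
        exact mul_nonpos_of_nonpos_of_nonneg hz (by linarith))
      linarith
    · have b1 := Lap_bound hψi T z (fun x hx => by
        have : ¬ x < T := by
          intro hc; apply hx; simp [hφ, hc]
        exact mul_nonpos_of_nonneg_of_nonpos hz (by linarith))
      have b2 := Lap_bound (hh.cv hh).integrable (2 * T) z (fun x hx => by
        have : ¬ x < 2 * T := fun hc => hx (hT x hc)
        exact mul_nonpos_of_nonneg_of_nonpos hz (by linarith))
      have b3 : cexp (z * (2 * T : ℝ)) * Lap (cv h h) (-z) = (cexp (z * T) * Lap h (-z)) ^ 2 := by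
        rw [Lap_cv hh hh, mul_pow, ← Complex.exp_nat_mul]
        rw [sq]; congr 2; push_cast; ring
      rw [b3, norm_pow] at b2
      have b4 : ‖cexp (z * T) * Lap h (-z)‖ ≤ 1 + ∫ x, ‖cv h h x‖ := by
        nlinarith [sq_nonneg (‖cexp (z * T) * Lap h (-z)‖ - 1)]
      have : E z = cexp (z * T) * Lap h (-z) - cexp (z * T) * Lap (fun x => h x - φ x) (-z) := by
        simp only [hE]; rw [hLsub]; ring
      rw [this]
      refine (norm_sub_le _ _).trans ?_
      linarith
  have hconst : ∀ z, E z = E 0 := fun z => hEd.apply_eq_apply_of_bounded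
    ((isBounded_iff_forall_norm_le).2 ⟨_, by rintro _ ⟨z, rfl⟩; exact hbound z⟩) z 0
  have hnorm : ∀ ξ : ℝ, ‖𝓕 φ ξ‖ = ‖E 0‖ := by
    intro ξ
    rw [fourier_eq_Lap, ← hconst (-(((-2 * π * ξ : ℝ) : ℂ) * I))]
    simp only [hE, neg_neg, norm_mul]
    rw [Complex.norm_exp]
    simp
  have hE0 : E 0 = 0 := by
    have h1 := (Real.zero_at_infty_fourier φ).norm
    simp only [hnorm, norm_zero] at h1
    exact norm_eq_zero.mp (tendsto_nhds_unique tendsto_const_nhds h1)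
  have hL0 : ∀ y : ℝ, Lap φ (y * I) = 0 := by
    intro y
    have := hconst (-(y * I))
    rw [hE0] at this
    simp only [hE, neg_neg] at this
    exact (mul_eq_zero.mp this).resolve_left (Complex.exp_ne_zero _)
  intro x hx
  have hev : φ =ᶠ[𝓝 x] h := by
    filter_upwards [Iio_mem_nhds hx] with y hy
    simp [hφ, mem_Iio.mp hy]
  have := eq_zero_of_Lap hφi hL0 (v := x) (hh.cont.continuousAt.congr hev.symm)
  rwa [hev.eq_of_nhds] at this

/-- Multiplication by `x ^ n`. -/
def Dn (n : ℕ) (f : ℝ → ℂ) : ℝ → ℂ := fun x => (x : ℂ) ^ n * f x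

lemma CC.Dn {f : ℝ → ℂ} (hf : CC f) (n : ℕ) : CC (Dn n f) :=
  hf.mul (p := fun x : ℝ => (x : ℂ) ^ n) (by fun_prop)

lemma V_Dn {f : ℝ → ℂ} {s : ℝ} (hf : V f s) (n : ℕ) : V (Dn n f) s := fun x hx => by
  simp [Dn, hf x hx]

lemma CC.int_cv {f g : ℝ → ℂ} (hf : CC f) (hg : CC g) (x : ℝ) :
    Integrable fun t => f t * g (x - t) :=
  (hf.mul' (p := fun t => g (x - t)) (hg.cont.comp (by fun_prop))).integrable

lemma Dn_cv {f g : ℝ → ℂ} (hf : CC f) (hg : CC g) (k : ℕ) :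
    Dn k (cv f g) = fun x => ∑ i ∈ Finset.range (k + 1),
      (k.choose i : ℂ) * cv (Dn i f) (Dn (k - i) g) x := by
  ext x
  simp only [Dn, cv]
  simp_rw [← integral_const_mul]
  rw [← integral_finsetSum]
  · congr 1
    ext t
    have : (x : ℂ) ^ k = ((t : ℂ) + ((x - t : ℝ) : ℂ)) ^ k := by push_cast; ring
    rw [this, add_pow, Finset.sum_mul]
    refine Finset.sum_congr rfl fun i _ => ?_
    ring
  · intro i _
    exact ((hf.Dn i).int_cv (hg.Dn (k - i)) x).const_mul _

lemma Lap_sum {ι : Type*} (s : Finset ι) (c : ι → ℂ) {F : ι → ℝ → ℂ} (hF : ∀ i, CC (F i)) (z : ℂ) :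
    Lap (fun x => ∑ i ∈ s, c i * F i x) z = ∑ i ∈ s, c i * Lap (F i) z := by
  simp only [Lap, Finset.sum_mul]
  rw [integral_finsetSum]
  · refine Finset.sum_congr rfl fun i _ => ?_
    rw [← integral_const_mul]
    simp only [mul_assoc]
  · intro i _
    simpa only [mul_assoc] using ((hF i).intLap z).const_mul (c i)

lemma CC.smul {f : ℝ → ℂ} (hf : CC f) (c : ℂ) : CC (fun x => c * f x) :=
  hf.mul continuous_const

lemma key_identity {f g : ℝ → ℂ} (hf : CC f) (hg : CC g) (i j : ℕ) (x : ℝ) :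
    ((i + j).choose i : ℂ) * cv (cv (Dn i f) (Dn j g)) (cv (Dn i f) (Dn j g)) x =
      cv (cv (Dn i f) (Dn j g)) (Dn (i + j) (cv f g)) x -
      ∑ l ∈ (Finset.range (i + j + 1)).erase i, ((i + j).choose l : ℂ) *
        cv (cv (Dn i f) (Dn (i + j - l) g)) (cv (Dn l f) (Dn j g)) x := by
  have hW : ∀ a b, CC (cv (Dn a f) (Dn b g)) := fun a b => (hf.Dn a).cv (hg.Dn b)
  have hS : CC (fun x => ∑ l ∈ (Finset.range (i + j + 1)).erase i, ((i + j).choose l : ℂ) *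
        cv (cv (Dn i f) (Dn (i + j - l) g)) (cv (Dn l f) (Dn j g)) x) :=
    CC.sum _ fun l => ((hW i (i + j - l)).cv (hW l j)).smul _
  refine eq_of_Lap (((hW i j).cv (hW i j)).smul _)
    (((hW i j).cv ((hf.cv hg).Dn (i + j))).sub hS) (fun z => ?_) x
  have e1 : Lap (fun x => ((i + j).choose i : ℂ) *
      cv (cv (Dn i f) (Dn j g)) (cv (Dn i f) (Dn j g)) x) z =
      ((i + j).choose i : ℂ) * ((Lap (Dn i f) z * Lap (Dn j g) z) *
        (Lap (Dn i f) z * Lap (Dn j g) z)) := by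
    rw [← Lap_cv (hf.Dn i) (hg.Dn j), ← Lap_cv (hW i j) (hW i j)]
    simp only [Lap]
    rw [← integral_const_mul]; simp only [mul_assoc]
  have e2 : Lap (fun x => cv (cv (Dn i f) (Dn j g)) (Dn (i + j) (cv f g)) x -
      ∑ l ∈ (Finset.range (i + j + 1)).erase i, ((i + j).choose l : ℂ) *
        cv (cv (Dn i f) (Dn (i + j - l) g)) (cv (Dn l f) (Dn j g)) x) z =
      Lap (cv (cv (Dn i f) (Dn j g)) (Dn (i + j) (cv f g))) z -
      Lap (fun x => ∑ l ∈ (Finset.range (i + j + 1)).erase i, ((i + j).choose l : ℂ) *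
        cv (cv (Dn i f) (Dn (i + j - l) g)) (cv (Dn l f) (Dn j g)) x) z := by
    simp only [Lap, sub_mul]
    exact integral_sub (((hW i j).cv ((hf.cv hg).Dn (i + j))).intLap z) (hS.intLap z)
  rw [e1, e2, Lap_sum _ _ (fun l => (hW i (i + j - l)).cv (hW l j)),
    Lap_cv (hW i j) ((hf.cv hg).Dn (i + j)), Dn_cv hf hg,
    Lap_sum _ _ (fun l => hW l (i + j - l)), Lap_cv (hf.Dn i) (hg.Dn j)]
  simp only [Lap_cv (hW _ _) (hW _ _), Lap_cv (hf.Dn _) (hg.Dn _)]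
  rw [← Finset.add_sum_erase (Finset.range (i + j + 1)) _ (a := i) (by simp)]
  rw [mul_add, Finset.mul_sum, Nat.add_sub_cancel_left]
  have : ∀ l, Lap (Dn i f) z * Lap (Dn j g) z *
      (((i + j).choose l : ℂ) * (Lap (Dn l f) z * Lap (Dn (i + j - l) g) z)) =
      ((i + j).choose l : ℂ) * (Lap (Dn i f) z * Lap (Dn (i + j - l) g) z *
        (Lap (Dn l f) z * Lap (Dn j g) z)) := fun l => by ring
  simp only [this]
  ring

/-- Truncated left end of the support. -/
def Aₜ (c : ℝ) (h : ℝ → ℂ) : ℝ := sSup {s | s ≤ c ∧ V h s}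

lemma V_A {c : ℝ} {h : ℝ → ℂ} (h0 : V h 0) (hc : 0 ≤ c) : V h (Aₜ c h) := by
  intro x hx
  have hne : {s | s ≤ c ∧ V h s}.Nonempty := ⟨0, hc, h0⟩
  obtain ⟨s, hs, hxs⟩ := exists_lt_of_lt_csSup hne hx
  exact hs.2 x hxs

lemma le_A {c s : ℝ} {h : ℝ → ℂ} (hs : s ≤ c) (hV : V h s) : s ≤ Aₜ c h :=
  le_csSup ⟨c, fun _ h => h.1⟩ ⟨hs, hV⟩

lemma titch_aux {f g : ℝ → ℂ} (hf : CC f) (hg : CC g) (hf0 : V f 0) (hg0 : V g 0)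
    {c : ℝ} (hc : 0 < c) (hfg : V (cv f g) c) {r : ℝ} (hr : 0 < r) (i₀ j₀ : ℕ) :
    V (cv (Dn i₀ f) (Dn j₀ g)) (c - r * (i₀ + j₀)) := by
  have hW : ∀ a b, CC (cv (Dn a f) (Dn b g)) := fun a b => (hf.Dn a).cv (hg.Dn b)
  have hW0 : ∀ a b, V (cv (Dn a f) (Dn b g)) 0 := fun a b => by
    simpa using V_cv (V_Dn hf0 a) (V_Dn hg0 b)
  set A : ℕ → ℕ → ℝ := fun a b => Aₜ c (cv (Dn a f) (Dn b g)) with hA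
  have hAV : ∀ a b, V (cv (Dn a f) (Dn b g)) (A a b) := fun a b => V_A (hW0 a b) hc.le
  have hA0 : ∀ a b, 0 ≤ A a b := fun a b => le_A hc.le (hW0 a b)
  by_contra hcon
  simp only [V, not_forall] at hcon
  obtain ⟨x₀, hx₀, hne⟩ := hcon
  have hAx : A i₀ j₀ ≤ x₀ := by
    by_contra hlt
    exact hne (hAV i₀ j₀ x₀ (not_le.mp hlt))
  set φ : ℕ × ℕ → ℝ := fun p => A p.1 p.2 + r * (p.1 + p.2) with hφ
  have hφ0 : φ (i₀, j₀) < c := by simp only [hφ]; linarith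
  obtain ⟨N, hN⟩ := exists_nat_gt (c / r)
  have hmemN : ∀ p : ℕ × ℕ, φ p < c → p ∈ Finset.range N ×ˢ Finset.range N := by
    rintro ⟨a, b⟩ hp
    rw [div_lt_iff₀ hr] at hN
    simp only [hφ] at hp
    have h1 := hA0 a b
    have h2 : r * ((a : ℝ) + b) < r * N := by linarith
    have h3 : (a : ℝ) + b < N := lt_of_mul_lt_mul_left h2 hr.le
    have h4 : a + b < N := by exact_mod_cast h3
    simp; omega
  obtain ⟨p, hp, hpmin⟩ := Finset.exists_min_image _ φ ⟨_, hmemN _ hφ0⟩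
  have hsc : φ p < c := (hpmin _ (hmemN _ hφ0)).trans_lt hφ0
  have hmin : ∀ q, φ p ≤ φ q := by
    intro q
    by_cases hq : φ q < c
    · exact hpmin q (hmemN q hq)
    · linarith
  obtain ⟨⟨i, j⟩, hq, hqmin⟩ := Finset.exists_min_image
    ((Finset.range N ×ˢ Finset.range N).filter fun q => φ q = φ p) (fun q => q.1 + q.2)
    ⟨p, by simp only [Finset.mem_filter]; exact ⟨hp, trivial⟩⟩
  have hqs : φ (i, j) = φ p := (Finset.mem_filter.mp hq).2
  have hstrict : ∀ a b, a + b < i + j → φ (i, j) < φ (a, b) := by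
    intro a b hab
    rw [hqs]
    refine lt_of_le_of_ne (hmin _) fun heq => ?_
    have := hqmin (a, b) (Finset.mem_filter.mpr ⟨hmemN _ (heq ▸ hsc), heq.symm⟩)
    simp only at this
    omega
  have hle : ∀ a b, φ (i, j) ≤ φ (a, b) := fun a b => hqs ▸ hmin _
  have hAc : A i j < c := by
    have h1 : φ (i, j) < c := hqs ▸ hsc
    simp only [hφ] at h1
    have : 0 ≤ r * ((i : ℝ) + j) := by positivity
    linarith
  have hgap : ∀ l ∈ (Finset.range (i + j + 1)).erase i,
      2 * A i j < A i (i + j - l) + A l j := by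
    intro l hl
    simp only [Finset.mem_erase, Finset.mem_range] at hl
    have h1 := hle i (i + j - l)
    have h2 := hle l j
    have hcast : ((i + j - l : ℕ) : ℝ) = i + j - l := by
      rw [Nat.cast_sub (by omega)]; push_cast; ring
    rcases lt_or_gt_of_ne hl.1 with h | h
    · have h3 := hstrict l j (by omega)
      simp only [hφ, hcast] at h1 h3
      linarith
    · have h3 := hstrict i (i + j - l) (by omega)
      simp only [hφ, hcast] at h2 h3
      linarith
  have hδ : ∃ δ > 0, A i j + δ / 2 ≤ c ∧ 2 * A i j + δ ≤ A i j + c ∧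
      ∀ l ∈ (Finset.range (i + j + 1)).erase i, 2 * A i j + δ ≤ A i (i + j - l) + A l j := by
    have ev1 : ∀ᶠ δ in 𝓝[>] (0 : ℝ), δ < c - A i j :=
      nhdsWithin_le_nhds (Iio_mem_nhds (by linarith))
    have ev2 : ∀ᶠ δ in 𝓝[>] (0 : ℝ), ∀ l ∈ (Finset.range (i + j + 1)).erase i,
        δ < A i (i + j - l) + A l j - 2 * A i j := by
      rw [Filter.eventually_all_finset]
      intro l hl
      exact nhdsWithin_le_nhds (Iio_mem_nhds (by linarith [hgap l hl]))
    obtain ⟨δ, ⟨h1, h2⟩, h3⟩ := ((ev1.and ev2).and self_mem_nhdsWithin).exists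
    have h3 : 0 < δ := h3
    exact ⟨δ, h3, by linarith, by linarith, fun l hl => by linarith [h2 l hl]⟩
  obtain ⟨δ, hδ0, hδ1, hδ2, hδ3⟩ := hδ
  have hsq : V (cv (cv (Dn i f) (Dn j g)) (cv (Dn i f) (Dn j g))) (2 * (A i j + δ / 2)) := by
    intro x hx
    have hid := key_identity hf hg i j x
    rw [V_cv (hAV i j) (V_Dn hfg (i + j)) x (by linarith), Finset.sum_eq_zero, sub_zero] at hid
    · refine (mul_eq_zero.mp hid).resolve_left ?_
      have := Nat.choose_pos (Nat.le_add_right i j)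
      exact_mod_cast this.ne'
    · intro l hl
      rw [V_cv (hAV i (i + j - l)) (hAV l j) x (by linarith [hδ3 l hl]), mul_zero]
  have := le_A hδ1 (V_square (hW i j) _ hsq)
  simp only [hA] at this
  linarith

lemma eq_zero_of_moments {f : ℝ → ℂ} (hf : CC f) (h : ∀ n : ℕ, ∫ x : ℝ, (x : ℂ) ^ n * f x = 0)
    (x : ℝ) : f x = 0 := by
  obtain ⟨R, hR⟩ := hf.bdd
  refine eq_zero_of_Lap hf.integrable (fun y => ?_) hf.cont.continuousAt
  set z : ℂ := y * I
  set F : ℕ → ℝ → ℂ := fun n t => (z ^ n / n.factorial) * ((t : ℂ) ^ n * f t) with hF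
  have hFi : ∀ n, Integrable (F n) := fun n => ((hf.Dn n).integrable.const_mul _)
  have hs : Summable fun n => ∫ t, ‖F n t‖ := by
    refine Summable.of_nonneg_of_le (fun n => integral_nonneg fun _ => norm_nonneg _) (fun n => ?_)
      ((Real.summable_pow_div_factorial (‖z‖ * |R|)).mul_right (∫ t, ‖f t‖))
    rw [← integral_const_mul]
    refine integral_mono (hFi n).norm (hf.integrable.norm.const_mul _) fun t => ?_
    by_cases ht : f t = 0
    · simp [hF, ht]
    have ht' : |t| ≤ |R| := (hR t ht).trans (le_abs_self R)
    simp only [hF, norm_mul, norm_div, norm_pow, Complex.norm_natCast, Complex.norm_real,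
      Real.norm_eq_abs, mul_pow]
    calc _ = (‖z‖ ^ n * |t| ^ n / n.factorial) * ‖f t‖ := by ring
      _ ≤ _ := by gcongr
  have hsum := hasSum_integral_of_summable_integral_norm hFi hs
  have hz : ∀ n, ∫ t, F n t = 0 := fun n => by
    simp only [hF]; rw [integral_const_mul, h, mul_zero]
  simp only [hz] at hsum
  rw [← hsum.unique hasSum_zero] 
  rw [Lap]
  congr 1
  ext t
  have := (NormedSpace.expSeries_div_hasSum_exp (z * t)).mul_right (f t)
  rw [← Complex.exp_eq_exp_ℂ] at this
  rw [mul_comm, ← this.tsum_eq]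
  congr 1
  ext n
  simp only [hF]
  ring

/-- Titchmarsh convolution theorem. -/
lemma titch {f g : ℝ → ℂ} (hf : CC f) (hg : CC g) (hf0 : V f 0) (hg0 : V g 0)
    {c : ℝ} (hfg : V (cv f g) c) (x y : ℝ) (hxy : x + y < c) : f x = 0 ∨ g y = 0 := by
  by_cases hx : x < 0
  · exact Or.inl (hf0 x hx)
  by_cases hy : y < 0
  · exact Or.inr (hg0 y hy)
  have hc : 0 < c := by linarith
  have hmom : ∀ n : ℕ, ∫ t : ℝ, (t : ℂ) ^ n * (f t * g (x + y - t)) = 0 := by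
    intro n
    have := titch_aux hf hg hf0 hg0 hc hfg (r := (c - (x + y)) / (n + 1))
      (by apply div_pos <;> [linarith; positivity]) n 0 (x + y) (by
        have : (c - (x + y)) / (n + 1) * ((n : ℝ) + (0 : ℕ)) < c - (x + y) := by
          rw [div_mul_eq_mul_div, div_lt_iff₀ (by positivity)]
          push_cast; nlinarith
        linarith)
    simpa [cv, Dn, mul_assoc] using this
  have hψ : CC fun t => f t * g (x + y - t) :=
    hf.mul' (p := fun t => g (x + y - t)) (hg.cont.comp (by fun_prop))
  have := eq_zero_of_moments hψ hmom x
  simpa using this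

/-- Translated version. -/
lemma titch' {f g : ℝ → ℂ} (hf : CC f) (hg : CC g) {a b : ℝ} (hf0 : V f a) (hg0 : V g b)
    {c : ℝ} (hfg : V (cv f g) c) (x y : ℝ) (hxy : x + y < c) : f x = 0 ∨ g y = 0 := by
  have htr : ∀ {h : ℝ → ℂ}, CC h → ∀ a : ℝ, CC fun x => h (x + a) := fun hh a =>
    ⟨hh.cont.comp (by fun_prop), hh.supp.comp_homeomorph (Homeomorph.addRight a)⟩
  have := titch (f := fun x => f (x + a)) (g := fun x => g (x + b)) (htr hf a) (htr hg b)
    (fun x hx => hf0 _ (by linarith)) (fun x hx => hg0 _ (by linarith))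
    (c := c - a - b) (fun x hx => by
      have h1 := hfg (x + a + b) (by linarith)
      rw [← h1, cv, cv, ← integral_add_right_eq_self (fun t => f t * g (x + a + b - t)) a]
      congr 1
      ext t
      congr 2; ring) (x - a) (y - b) (by linarith)
  simpa using this

lemma mem_R2 {a b x : ℝ} (h : (x : 𝕋) ∈ R2 (proj '' Icc a b)) :
    ∃ k : ℤ, x + k * π ∈ Icc a b := by
  rcases h with ⟨y, hy, hyx⟩ | ⟨_, ⟨y, hy, rfl⟩, hyx⟩
  · have : ((y - x : ℝ) : 𝕋) = 0 := by
      rw [AddCircle.coe_sub, sub_eq_zero]; exact hyx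
    obtain ⟨n, hn⟩ := AddCircle.coe_eq_zero_iff _ |>.mp this
    refine ⟨2 * n, ?_⟩
    rw [zsmul_eq_mul] at hn
    have : x + ((2 * n : ℤ) : ℝ) * π = y := by push_cast; linarith
    rwa [this]
  · have : ((π + y - x : ℝ) : 𝕋) = 0 := by
      rw [AddCircle.coe_sub, sub_eq_zero, AddCircle.coe_add]; exact hyx
    obtain ⟨n, hn⟩ := AddCircle.coe_eq_zero_iff _ |>.mp this
    refine ⟨2 * n - 1, ?_⟩
    rw [zsmul_eq_mul] at hn
    have : x + ((2 * n - 1 : ℤ) : ℝ) * π = y := by push_cast; linarith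
    rwa [this]

lemma vanish_of {f : 𝕋 → ℂ} {a b x : ℝ} (hs : tsupport f ⊆ R2 (proj '' Icc a b))
    (hx : ∀ k : ℤ, x + k * π ∉ Icc a b) : f (x : 𝕋) = 0 := by
  by_contra h
  obtain ⟨k, hk⟩ := mem_R2 (hs (subset_tsupport _ h))
  exact hx k hk

lemma not_mem_window {a b x : ℝ} (h1 : b - π < x) (h2 : x < a + π) (h3 : x ∉ Icc a b) (k : ℤ) :
    x + k * π ∉ Icc a b := by
  rintro ⟨h4, h5⟩
  have hpi := Real.pi_pos
  rcases lt_trichotomy k 0 with hk | hk | hk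
  · have : (k : ℝ) ≤ -1 := by exact_mod_cast (by omega : k ≤ -1)
    nlinarith
  · subst hk; simp at h4 h5; exact h3 ⟨h4, h5⟩
  · have : (1 : ℝ) ≤ k := by exact_mod_cast (by omega : 1 ≤ k)
    nlinarith

/-- The even/odd part (up to a factor). -/
def P (f : 𝕋 → ℂ) (ε : ℂ) : 𝕋 → ℂ := fun z => f z + ε * f (z - (π : 𝕋))

lemma two_pi_zero : (π : 𝕋) + (π : 𝕋) = 0 := by
  rw [← AddCircle.coe_add, ← two_mul]
  exact AddCircle.coe_period _

lemma sub_pi_pi (z : 𝕋) : z - (π : 𝕋) - (π : 𝕋) = z := by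
  rw [sub_sub, two_pi_zero, sub_zero]

lemma P_cont {f : 𝕋 → ℂ} (hf : Continuous f) (ε : ℂ) : Continuous (P f ε) :=
  hf.add (continuous_const.mul (hf.comp (continuous_id.sub continuous_const)))

lemma P_sub {f : 𝕋 → ℂ} {ε : ℂ} (hε : ε * ε = 1) (z : 𝕋) :
    P f ε (z - (π : 𝕋)) = ε * P f ε z := by
  simp only [P, sub_pi_pi]
  linear_combination (-f (z - (π : 𝕋))) * hε

lemma P_vanish {f : 𝕋 → ℂ} {a b x : ℝ} (hs : tsupport f ⊆ R2 (proj '' Icc a b)) (ε : ℂ)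
    (hx : ∀ k : ℤ, x + k * π ∉ Icc a b) : P f ε (x : 𝕋) = 0 := by
  have h1 := vanish_of hs hx
  have h2 : f ((x - π : ℝ) : 𝕋) = 0 := vanish_of hs fun k => by
    have := hx (k - 1)
    push_cast at this
    convert this using 1
    ring
  rw [AddCircle.coe_sub] at h2
  simp [P, h1, h2]

/-- Restriction of the even/odd part to the fundamental interval. -/
def Ex (f : 𝕋 → ℂ) (ε : ℂ) (a b : ℝ) : ℝ → ℂ :=
  (Icc a b).indicator fun x => P f ε (x : 𝕋)

lemma Ex_eq {f : 𝕋 → ℂ} {a b x : ℝ} (hs : tsupport f ⊆ R2 (proj '' Icc a b)) (ε : ℂ)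
    (h1 : b - π < x) (h2 : x < a + π) : Ex f ε a b x = P f ε (x : 𝕋) := by
  by_cases h3 : x ∈ Icc a b
  · simp only [Ex, indicator_of_mem h3]
  · rw [P_vanish hs ε (not_mem_window h1 h2 h3)]
    simp only [Ex, indicator_of_notMem h3]

lemma Ex_V (f : 𝕋 → ℂ) (ε : ℂ) (a b : ℝ) : V (Ex f ε a b) a := by
  intro x hx
  exact indicator_of_notMem (fun h => absurd h.1 (not_le.mpr hx)) _

lemma Ex_CC {f : 𝕋 → ℂ} (hf : Continuous f) {a b : ℝ} (hab : b - a < π)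
    (hs : tsupport f ⊆ R2 (proj '' Icc a b)) (ε : ℂ) : CC (Ex f ε a b) := by
  constructor
  · rw [continuous_iff_continuousAt]
    intro x
    by_cases hx : x ∈ Ioo (b - π) (a + π)
    · have hev : Ex f ε a b =ᶠ[𝓝 x] fun y => P f ε (y : 𝕋) := by
        filter_upwards [isOpen_Ioo.mem_nhds hx] with y hy
        exact Ex_eq hs ε hy.1 hy.2
      refine ContinuousAt.congr ?_ hev.symm
      exact ((P_cont hf ε).comp (AddCircle.continuous_mk' _)).continuousAt
    · have hx' : x ∈ (Icc a b)ᶜ := fun h => hx ⟨by linarith [h.1], by linarith [h.2]⟩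
      have hev : Ex f ε a b =ᶠ[𝓝 x] fun _ => 0 := by
        filter_upwards [isClosed_Icc.isOpen_compl.mem_nhds hx'] with y hy
        exact indicator_of_notMem hy _
      exact continuousAt_const.congr hev.symm
  · exact HasCompactSupport.intro isCompact_Icc fun x hx => indicator_of_notMem hx _

lemma int_circ {q : 𝕋 → ℂ} (hq : Continuous q) : Integrable q :=
  hq.integrable_of_hasCompactSupport (HasCompactSupport.of_compactSpace q)

lemma circConv_P {f g : 𝕋 → ℂ} (hf : Continuous f) (hg : Continuous g) {ε : ℂ} (hε : ε * ε = 1)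
    (x : 𝕋) : circConv (P f ε) (P g ε) x =
      2 * (circConv f g x + ε * circConv f g (x - (π : 𝕋))) := by
  have c1 : Continuous fun t => f t * g (x - t) := by fun_prop
  have c2 : Continuous fun t => f t * g (x - (π : 𝕋) - t) := by fun_prop
  have c3 : Continuous fun t => f (t - (π : 𝕋)) * g (x - (π : 𝕋) - (t - (π : 𝕋))) := by fun_prop
  have c4 : Continuous fun t => f (t - (π : 𝕋)) * g (x - (t - (π : 𝕋))) := by fun_prop
  have e : ∀ t, P f ε t * P g ε (x - t) =
      (f t * g (x - t) + ε * (f t * g (x - (π : 𝕋) - t))) +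
      (ε * (f (t - (π : 𝕋)) * g (x - (π : 𝕋) - (t - (π : 𝕋)))) +
        f (t - (π : 𝕋)) * g (x - (t - (π : 𝕋)))) := by
    intro t
    have h1 : x - (π : 𝕋) - (t - (π : 𝕋)) = x - t := by abel
    have h2 : x - (t - (π : 𝕋)) = x - t - (π : 𝕋) := by
      have := two_pi_zero
      calc x - (t - (π : 𝕋)) = x - t - (π : 𝕋) + ((π : 𝕋) + (π : 𝕋)) := by abel
        _ = _ := by rw [this, add_zero]
    have h3 : x - (π : 𝕋) - t = x - t - (π : 𝕋) := by abel
    rw [h1, h2, h3]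
    simp only [P]
    linear_combination (f (t - (π : 𝕋)) * g (x - t - (π : 𝕋))) * hε
  have s1 := integral_sub_right_eq_self (μ := (volume : Measure 𝕋))
    (fun t => f t * g (x - (π : 𝕋) - t)) (π : 𝕋)
  have s2 := integral_sub_right_eq_self (μ := (volume : Measure 𝕋))
    (fun t => f t * g (x - t)) (π : 𝕋)
  simp only [circConv, e]
  have c12 : Continuous fun t => f t * g (x - t) + ε * (f t * g (x - (π : 𝕋) - t)) :=
    c1.add (continuous_const.mul c2)
  have c34 : Continuous fun t => ε * (f (t - (π : 𝕋)) * g (x - (π : 𝕋) - (t - (π : 𝕋)))) +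
        f (t - (π : 𝕋)) * g (x - (t - (π : 𝕋))) := (continuous_const.mul c3).add c4
  rw [integral_add (int_circ c12) (int_circ c34),
    integral_add (int_circ c1) ((int_circ c2).const_mul ε),
    integral_add ((int_circ c3).const_mul ε) (int_circ c4),
    integral_const_mul, integral_const_mul, s1, s2]
  ring

lemma circConv_Ex {f g : 𝕋 → ℂ} (hf : Continuous f) (hg : Continuous g) {ε : ℂ} (hε : ε * ε = 1)
    {aI bI aJ bJ : ℝ} (hI : aI ≤ bI) (hJ : aJ ≤ bJ) (hlen : (bI - aI) + (bJ - aJ) < π)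
    (hsf : tsupport f ⊆ R2 (proj '' Icc aI bI))
    (hsg : tsupport g ⊆ R2 (proj '' Icc aJ bJ)) {x : ℝ} (h1 : aI + aJ ≤ x) (h2 : x ≤ bI + bJ) :
    circConv (P f ε) (P g ε) (x : 𝕋) = 2 * cv (Ex f ε aI bI) (Ex g ε aJ bJ) x := by
  have hpi := Real.pi_pos
  set t₀ : ℝ := (aI + bI - π) / 2 with ht₀
  set q : ℝ → ℂ := fun s => P f ε (s : 𝕋) * P g ε ((x : 𝕋) - (s : 𝕋)) with hq
  have hqc : Continuous q := by
    have hp : Continuous fun s : ℝ => (s : 𝕋) := AddCircle.continuous_mk' _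
    exact ((P_cont hf ε).comp hp).mul ((P_cont hg ε).comp (continuous_const.sub hp))
  have hper : ∀ s, q (s + π) = q s := by
    intro s
    have e1 : ((s + π : ℝ) : 𝕋) = (s : 𝕋) - (π : 𝕋) := by
      rw [AddCircle.coe_add, eq_sub_iff_add_eq, add_assoc, two_pi_zero, add_zero]
    have e2 : (x : 𝕋) - ((s + π : ℝ) : 𝕋) = (x : 𝕋) - (s : 𝕋) - (π : 𝕋) := by
      rw [AddCircle.coe_add]; abel
    simp only [hq]
    rw [e2, e1, P_sub hε, P_sub hε]
    linear_combination (P f ε (s : 𝕋) * P g ε ((x : 𝕋) - (s : 𝕋))) * hε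
  have i1 : circConv (P f ε) (P g ε) (x : 𝕋) = ∫ s in t₀..t₀ + 2 * π, q s :=
    (AddCircle.intervalIntegral_preimage (2 * π) t₀
      (fun s => P f ε s * P g ε ((x : 𝕋) - s))).symm
  have i2 : ∫ s in t₀ + π..t₀ + 2 * π, q s = ∫ s in t₀..t₀ + π, q s := by
    have := intervalIntegral.integral_comp_add_right (a := t₀) (b := t₀ + π) q π
    simp only [hper] at this
    rw [this, show t₀ + π + π = t₀ + 2 * π by ring]
  rw [i1, ← intervalIntegral.integral_add_adjacent_intervals (b := t₀ + π)
    (hqc.intervalIntegrable _ _) (hqc.intervalIntegrable _ _), i2, ← two_mul]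
  congr 1
  have hz : ∀ s, s ∉ Ioc t₀ (t₀ + π) → Ex f ε aI bI s * Ex g ε aJ bJ (x - s) = 0 := by
    intro s hs
    have hsI : s ∉ Icc aI bI := fun h => hs ⟨by linarith [h.1], by linarith [h.2]⟩
    have : Ex f ε aI bI s = 0 := indicator_of_notMem hsI _
    rw [this, zero_mul]
  rw [intervalIntegral.integral_of_le (by linarith), cv,
    ← setIntegral_eq_integral_of_forall_compl_eq_zero hz]
  refine setIntegral_congr_fun measurableSet_Ioc fun s hs => ?_
  have hs1 := hs.1
  have hs2 := hs.2
  simp only [hq]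
  rw [← Ex_eq hsf ε (by linarith) (by linarith)]
  by_cases hsI : s ∈ Icc aI bI
  · rw [Ex_eq hsg ε (by linarith [hsI.2]) (by linarith [hsI.1]), AddCircle.coe_sub]
  · have : Ex f ε aI bI s = 0 := indicator_of_notMem hsI _
    rw [this, zero_mul, zero_mul]

lemma V_cv_Ex {f g : 𝕋 → ℂ} (hf : Continuous f) (hg : Continuous g) {ε : ℂ} (hε : ε * ε = 1)
    {aI bI aJ bJ aK bK : ℝ} (hI : aI ≤ bI) (hJ : aJ ≤ bJ) (hlen : (bI - aI) + (bJ - aJ) < π)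
    (hsf : tsupport f ⊆ R2 (proj '' Icc aI bI))
    (hsg : tsupport g ⊆ R2 (proj '' Icc aJ bJ))
    (haK : aI + aJ ≤ aK) (hKab : aK ≤ bK) (hbK : bK ≤ bI + bJ)
    (hsfg : tsupport (circConv f g) ⊆ R2 (proj '' Icc aK bK)) :
    V (cv (Ex f ε aI bI) (Ex g ε aJ bJ)) aK := by
  intro x hx
  by_cases hx' : x < aI + aJ
  · exact V_cv (Ex_V f ε aI bI) (Ex_V g ε aJ bJ) x hx'
  have hx' : aI + aJ ≤ x := not_lt.mp hx'
  have h1 := circConv_Ex hf hg hε hI hJ hlen hsf hsg hx' (by linarith)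
  have h2 := circConv_P hf hg hε (x : 𝕋)
  have h3 : P (circConv f g) ε (x : 𝕋) = 0 := P_vanish hsfg ε
    (not_mem_window (by linarith) (by linarith [Real.pi_pos])
      (fun h => absurd h.1 (not_le.mpr hx)))
  have h4 : circConv (P f ε) (P g ε) (x : 𝕋) = 2 * P (circConv f g) ε (x : 𝕋) := h2
  rw [h3, h1] at h4
  simpa using h4

lemma near_left {f : 𝕋 → ℂ} {a b : ℝ}
    (hs : tsupport f ⊆ R2 (proj '' Icc a b))
    (hmin : ∀ a' b' : ℝ, a ≤ a' → b' ≤ b → (a', b') ≠ (a, b) →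
      ¬ tsupport f ⊆ R2 (proj '' Icc a' b')) (c : ℝ) (hc : a < c) :
    ∃ x < c, Ex f 1 a b x ≠ 0 ∨ Ex f (-1) a b x ≠ 0 := by
  have hm := hmin c b hc.le le_rfl (fun h => hc.ne' (congrArg Prod.fst h))
  by_contra hcon
  push Not at hcon
  apply hm
  have hcomp : IsCompact (proj '' Icc c b) := isCompact_Icc.image (AddCircle.continuous_mk' _)
  have hclosed : IsClosed (R2 (proj '' Icc c b)) :=
    hcomp.isClosed.union (hcomp.vadd _).isClosed
  refine closure_minimal (fun z hz => ?_) hclosed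
  have hzero : ∀ y ∈ Icc a b, y < c → f (y : 𝕋) = 0 ∧ f ((y : 𝕋) - (π : 𝕋)) = 0 := by
    intro y hy hyc
    obtain ⟨h1, h2⟩ := hcon y hyc
    simp only [Ex, indicator_of_mem hy, P] at h1 h2
    constructor
    · linear_combination (h1 + h2) / 2
    · linear_combination (h1 - h2) / 2
  rcases hs (subset_tsupport _ hz) with ⟨y, hy, hyz⟩ | ⟨_, ⟨y, hy, rfl⟩, hyz⟩
  · by_cases hyc : y < c
    · refine absurd ?_ hz
      rw [← hyz]; exact (hzero y hy hyc).1
    · exact Or.inl ⟨y, ⟨not_lt.mp hyc, hy.2⟩, hyz⟩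
  · by_cases hyc : y < c
    · refine absurd ?_ hz
      have : z = (y : 𝕋) - (π : 𝕋) := by
        rw [← hyz]
        change (π : 𝕋) + (y : 𝕋) = _
        rw [eq_sub_iff_add_eq, add_right_comm, two_pi_zero, zero_add]
      rw [this]; exact (hzero y hy hyc).2
    · exact Or.inr ⟨_, ⟨y, ⟨not_lt.mp hyc, hy.2⟩, rfl⟩, hyz⟩

lemma combine_aux {F₁ F₂ G₁ : ℝ → ℂ} {a b k : ℝ} (hk : a + b < k)
    (h1 : ∀ x y, x + y < k → F₁ x = 0 ∨ G₁ y = 0)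
    (hF : ∀ c, a < c → ∃ x < c, F₁ x ≠ 0 ∨ F₂ x ≠ 0)
    (hV : V F₂ (k - b)) : V G₁ (k - a) := by
  intro y hy
  obtain ⟨x, hx, hne⟩ := hF (min (k - y) (k - b)) (lt_min (by linarith) (by linarith))
  have hx1 := hx.trans_le (min_le_left _ _)
  have hx2 := hx.trans_le (min_le_right _ _)
  have hne1 : F₁ x ≠ 0 := hne.resolve_right (fun h => h (hV x hx2))
  exact (h1 x y (by linarith)).resolve_left hne1

lemma combine {F₁ F₂ G₁ G₂ : ℝ → ℂ} {a b k : ℝ} (hk : a + b < k)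
    (h1 : ∀ x y, x + y < k → F₁ x = 0 ∨ G₁ y = 0)
    (h2 : ∀ x y, x + y < k → F₂ x = 0 ∨ G₂ y = 0)
    (hF : ∀ c, a < c → ∃ x < c, F₁ x ≠ 0 ∨ F₂ x ≠ 0)
    (hG : ∀ c, b < c → ∃ x < c, G₁ x ≠ 0 ∨ G₂ x ≠ 0) :
    (V F₂ (k - b) ∧ V G₁ (k - a)) ∨ (V F₁ (k - b) ∧ V G₂ (k - a)) := by
  by_cases hV : V F₂ (k - b)
  · exact Or.inl ⟨hV, combine_aux hk h1 hF hV⟩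
  · right
    simp only [V, not_forall] at hV
    obtain ⟨x₀, hx₀, hne⟩ := hV
    have hG2 : V G₂ (k - x₀) := fun y hy => (h2 x₀ y (by linarith)).resolve_left hne
    have hF1 : V F₁ (k - b) := by
      intro x hx
      obtain ⟨y, hy, hyne⟩ := hG (min (k - x) (k - x₀)) (lt_min (by linarith) (by linarith))
      have hy1 := hy.trans_le (min_le_left _ _)
      have hy2 := hy.trans_le (min_le_right _ _)
      exact (h1 x y (by linarith)).resolve_right
        (hyne.resolve_right (fun h => h (hG2 y hy2)))
    exact ⟨hF1, combine_aux hk h2 (fun c hc => by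
      obtain ⟨x, hx, h⟩ := hF c hc
      exact ⟨x, hx, h.symm⟩) hF1⟩

end TCirc

/-- Titchmarsh theorem on the circle, case `n = 2`, forward direction. -/
theorem titchmarsh_circle_n2_forward
    (f g : 𝕋 → ℂ) (hf : Continuous f) (hg : Continuous g)
    (aI bI aJ bJ : ℝ) (hI : aI ≤ bI) (hJ : aJ ≤ bJ)
    (hlen : (bI - aI) + (bJ - aJ) < π)
    (hsf : tsupport f ⊆ R2 (proj '' Icc aI bI))
    (hminf : ∀ a' b' : ℝ, aI ≤ a' → b' ≤ bI → (a', b') ≠ (aI, bI) →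
      ¬ tsupport f ⊆ R2 (proj '' Icc a' b'))
    (hsg : tsupport g ⊆ R2 (proj '' Icc aJ bJ))
    (hming : ∀ a' b' : ℝ, aJ ≤ a' → b' ≤ bJ → (a', b') ≠ (aJ, bJ) →
      ¬ tsupport g ⊆ R2 (proj '' Icc a' b'))
    (aK bK : ℝ) (haK : aI + aJ ≤ aK) (hKab : aK ≤ bK) (hbK : bK ≤ bI + bJ)
    (hsfg : tsupport (circConv f g) ⊆ R2 (proj '' Icc aK bK))
    (hlam : 0 < aK - aI - aJ) :
    ∃ α : ℂ, (α = 1 ∨ α = -1) ∧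
      (∀ x ∈ proj '' Ioo (bI - π) (aI + (aK - aI - aJ)),
        f x + α * shift (proj π) f x = 0) ∧
      (∀ x ∈ proj '' Ioo (bJ - π) (aJ + (aK - aI - aJ)),
        g x - α * shift (proj π) g x = 0) := by
  have e1 : (1 : ℂ) * 1 = 1 := by norm_num
  have e2 : (-1 : ℂ) * -1 = 1 := by norm_num
  have hlI : bI - aI < π := by linarith
  have hlJ : bJ - aJ < π := by linarith
  have T : ∀ ε : ℂ, ε * ε = 1 → ∀ x y, x + y < aK →
      TCirc.Ex f ε aI bI x = 0 ∨ TCirc.Ex g ε aJ bJ y = 0 := fun ε hε =>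
    TCirc.titch' (TCirc.Ex_CC hf hlI hsf ε) (TCirc.Ex_CC hg hlJ hsg ε)
      (TCirc.Ex_V f ε aI bI) (TCirc.Ex_V g ε aJ bJ)
      (TCirc.V_cv_Ex hf hg hε hI hJ hlen hsf hsg haK hKab hbK hsfg)
  have hC := TCirc.combine (by linarith) (T 1 e1) (T (-1) e2)
    (TCirc.near_left hsf hminf) (TCirc.near_left hsg hming)
  have finF : ∀ ε : ℂ, TCirc.V (TCirc.Ex f ε aI bI) (aK - aJ) →
      ∀ x ∈ proj '' Ioo (bI - π) (aI + (aK - aI - aJ)), f x + ε * shift (proj π) f x = 0 := by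
    rintro ε hV _ ⟨x, hx, rfl⟩
    have h := hV x (by linarith [hx.2])
    rw [TCirc.Ex_eq hsf ε hx.1 (by linarith [hx.2])] at h
    exact h
  have finG : ∀ ε : ℂ, TCirc.V (TCirc.Ex g ε aJ bJ) (aK - aI) →
      ∀ x ∈ proj '' Ioo (bJ - π) (aJ + (aK - aI - aJ)), g x + ε * shift (proj π) g x = 0 := by
    rintro ε hV _ ⟨x, hx, rfl⟩
    have h := hV x (by linarith [hx.2])
    rw [TCirc.Ex_eq hsg ε hx.1 (by linarith [hx.2])] at h
    exact h
  rcases hC with ⟨hF, hG⟩ | ⟨hF, hG⟩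
  · refine ⟨-1, Or.inr rfl, finF _ hF, fun x hx => ?_⟩
    have := finG _ hG x hx
    linear_combination this
  · refine ⟨1, Or.inl rfl, finF _ hF, fun x hx => ?_⟩
    have := finG _ hG x hx
    linear_combination this

end
end
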